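/- arXiv:0902.4589 — 2 statements merged into one kernel-verified Lean document; each statement's English description precedes it below -/
import Mathlib

section
/- Let m ≥ 5 be an integer and let K ⊆ ℝ³ be the polyhedral cone generated by the vectors y_j = (cos(2jπ/m), sin(2jπ/m), 1)^T, j = 1, …, m. Then there do not exist a K-primitive matrix A and an enumeration x_1, …, x_m of pairwise non-proportional extreme vectors of K such that A x_i is a positive scalar multiple of x_{i+1} for i = 1, …, m−1 and A x_m = α x_1 + β x_2 for some positive reals α, β. -/
open Matrix Set Real

noncomputable section

/-- A proper cone in `ℝ^n`: a closed convex cone that is pointed and full. -/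
def IsProperCone {n : ℕ} (K : Set (Fin n → ℝ)) : Prop :=
  IsClosed K ∧ (∀ x ∈ K, ∀ y ∈ K, x + y ∈ K) ∧
    (∀ (c : ℝ), 0 ≤ c → ∀ x ∈ K, c • x ∈ K) ∧
    K ∩ (-K) = {0} ∧ (interior K).Nonempty

/-- The positive hull (cone generated by) finitely many vectors. -/
def ConeGen {n m : ℕ} (y : Fin m → Fin n → ℝ) : Set (Fin n → ℝ) :=
  {x | ∃ c : Fin m → ℝ, (∀ j, 0 ≤ c j) ∧ x = ∑ j, c j • y j}

/-- A polyhedral cone: a proper cone that is the positive hull of finitely many vectors. -/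
def IsPolyhedralCone {n : ℕ} (K : Set (Fin n → ℝ)) : Prop :=
  IsProperCone K ∧ ∃ (m : ℕ) (y : Fin m → Fin n → ℝ), K = ConeGen y

/-- `A` is `K`-nonnegative: `A K ⊆ K`. -/
def KNonneg {n : ℕ} (K : Set (Fin n → ℝ)) (A : Matrix (Fin n) (Fin n) ℝ) : Prop :=
  ∀ x ∈ K, A.mulVec x ∈ K

/-- `A` is `K`-positive: `A` maps `K \ {0}` into the interior of `K`. -/
def KPositive {n : ℕ} (K : Set (Fin n → ℝ)) (A : Matrix (Fin n) (Fin n) ℝ) : Prop :=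
  ∀ x ∈ K, x ≠ 0 → A.mulVec x ∈ interior K

/-- `A` is `K`-primitive: `A` is `K`-nonnegative and some power of `A` is `K`-positive. -/
def KPrimitive {n : ℕ} (K : Set (Fin n → ℝ)) (A : Matrix (Fin n) (Fin n) ℝ) : Prop :=
  KNonneg K A ∧ ∃ k : ℕ, 0 < k ∧ KPositive K (A ^ k)

/-- The exponent `γ(A)` of a `K`-primitive matrix: the least `k ≥ 1` with `A^k` `K`-positive. -/
def expnt {n : ℕ} (K : Set (Fin n → ℝ)) (A : Matrix (Fin n) (Fin n) ℝ) : ℕ :=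
  sInf {k : ℕ | 0 < k ∧ KPositive K (A ^ k)}

/-- `x` is an extreme vector of `K`. -/
def IsExtremeVec {n : ℕ} (K : Set (Fin n → ℝ)) (x : Fin n → ℝ) : Prop :=
  x ∈ K ∧ x ≠ 0 ∧ ∀ y ∈ K, ∀ z ∈ K, x = y + z →
    (∃ a : ℝ, 0 ≤ a ∧ y = a • x) ∧ (∃ b : ℝ, 0 ≤ b ∧ z = b • x)

/-- The set of extreme rays of `K`. -/
def ExtremeRays {n : ℕ} (K : Set (Fin n → ℝ)) : Set (Set (Fin n → ℝ)) :=
  {R | ∃ x, IsExtremeVec K x ∧ R = {y | ∃ c : ℝ, 0 ≤ c ∧ y = c • x}}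

/-- `K ∈ P(m,n)`: an `n`-dimensional polyhedral cone in `ℝ^n` with exactly `m` extreme rays.
(A proper cone in `ℝ^n` has nonempty interior, hence is automatically `n`-dimensional.) -/
def MemP {n : ℕ} (m : ℕ) (K : Set (Fin n → ℝ)) : Prop :=
  IsPolyhedralCone K ∧ (ExtremeRays K).ncard = m

/-- A face of a cone `K`. -/
def IsFace {n : ℕ} (K F : Set (Fin n → ℝ)) : Prop :=
  0 ∈ F ∧ F ⊆ K ∧ (∀ x ∈ F, ∀ y ∈ F, x + y ∈ F) ∧
    (∀ (c : ℝ), 0 ≤ c → ∀ x ∈ F, c • x ∈ F) ∧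
    ∀ x ∈ F, ∀ y ∈ K, x - y ∈ K → y ∈ F

/-- `A` is `K`-irreducible: `A` is `K`-nonnegative and leaves invariant no nontrivial face. -/
def KIrreducible {n : ℕ} (K : Set (Fin n → ℝ)) (A : Matrix (Fin n) (Fin n) ℝ) : Prop :=
  KNonneg K A ∧ ∀ F : Set (Fin n → ℝ), IsFace K F → (∀ x ∈ F, A.mulVec x ∈ F) →
    F = ({0} : Set (Fin n → ℝ)) ∨ F = K

/-- The polyhedral cone in `ℝ³` generated by `y_j = (cos(2jπ/m), sin(2jπ/m), 1)ᵀ`, `j = 1,…,m`. -/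
def Kcirc (m : ℕ) : Set (Fin 3 → ℝ) :=
  ConeGen (fun j : Fin m =>
    ![Real.cos (2 * ((j : ℕ) + 1) * π / m), Real.sin (2 * ((j : ℕ) + 1) * π / m), 1])

/-!
The signs of the scalar triple products `vertex a ⨯₃ vertex b ⬝ᵥ vertex c` record the cyclic order
of the vertices of the `m`-gon, and `A` multiplies every triple product by `det A`. Suppose that `A`
maps the cone into itself and permutes the vertex rays according to `g`, except possibly at one
vertex `v`. Pulling back a functional that exposes `v` shows that `A *ᵥ vertex v` lies beyond the
chord that cuts off the vertex `g v`. Hence `A` sends the edges avoiding `v` to edges, all with the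
same orientation, so `g` is a rotation or a reflection of the polygon. Four consecutive vertices of
a regular polygon satisfy a linear recurrence which `g` preserves. For `m ≥ 5` the four vertices
following `v` then force the scaling factors of `A` to agree, and the recurrence determines
`A *ᵥ vertex v`: it lies on the ray through `vertex (g v)`. A positive combination of two
non-proportional extreme vectors does not lie on either of their rays.
-/

section ScalarTripleProduct

variable {R : Type*} [CommRing R]

lemma cross_dot_rotate (a b c : Fin 3 → R) : a ⨯₃ b ⬝ᵥ c = b ⨯₃ c ⬝ᵥ a := by
  rw [dotProduct_comm, triple_product_permutation, dotProduct_comm]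

lemma cross_dot_swap (a b c : Fin 3 → R) : b ⨯₃ a ⬝ᵥ c = -(a ⨯₃ b ⬝ᵥ c) := by
  rw [← cross_anticomm, neg_dotProduct]

lemma cross_dot_left (a b : Fin 3 → R) : a ⨯₃ b ⬝ᵥ a = 0 := by
  rw [dotProduct_comm, dot_self_cross]

lemma cross_dot_right (a b : Fin 3 → R) : a ⨯₃ b ⬝ᵥ b = 0 := by
  rw [dotProduct_comm, dot_cross_self]

lemma cross_dot_mulVec (A : Matrix (Fin 3) (Fin 3) R) (a b c : Fin 3 → R) :
    (A *ᵥ a) ⨯₃ (A *ᵥ b) ⬝ᵥ A *ᵥ c = A.det * (a ⨯₃ b ⬝ᵥ c) := by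
  simp only [cross_apply, det_fin_three, mulVec, vec3_dotProduct, cons_val]
  ring

lemma cross_dot_mul_dotProduct (a b c d f : Fin 3 → R) :
    (a ⨯₃ b ⬝ᵥ c) * (f ⬝ᵥ d) =
      (d ⨯₃ b ⬝ᵥ c) * (f ⬝ᵥ a) + (a ⨯₃ d ⬝ᵥ c) * (f ⬝ᵥ b) + (a ⨯₃ b ⬝ᵥ d) * (f ⬝ᵥ c) := by
  simp only [cross_apply, vec3_dotProduct, cons_val]
  ring

lemma linearIndependent_of_cross_dot_ne_zero [IsDomain R] {a b c : Fin 3 → R}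
    (h : a ⨯₃ b ⬝ᵥ c ≠ 0) : LinearIndependent R ![a, b, c] := by
  rw [cross_dot_rotate, dotProduct_comm, triple_product_eq_det] at h
  exact linearIndependent_rows_of_det_ne_zero h

end ScalarTripleProduct

section GeneratedCone

variable {n m : ℕ} {y : Fin m → Fin n → ℝ} {x : Fin n → ℝ}

lemma dotProduct_nonneg_of_mem_coneGen {f : Fin n → ℝ} (hf : ∀ j, 0 ≤ f ⬝ᵥ y j)
    (hx : x ∈ ConeGen y) : 0 ≤ f ⬝ᵥ x := by
  obtain ⟨d, hd, rfl⟩ := hx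
  simp only [dotProduct_sum, dotProduct_smul, smul_eq_mul]
  exact Finset.sum_nonneg fun j _ => mul_nonneg (hd j) (hf j)

lemma dotProduct_pos_of_mem_coneGen {f h : Fin n → ℝ} (hf : ∀ j, 0 ≤ f ⬝ᵥ y j)
    (hfh : ∀ j, 0 < h ⬝ᵥ y j → 0 < f ⬝ᵥ y j) (hx : x ∈ ConeGen y) (hhx : 0 < h ⬝ᵥ x) :
    0 < f ⬝ᵥ x := by
  obtain ⟨d, hd, rfl⟩ := hx
  simp only [dotProduct_sum, dotProduct_smul, smul_eq_mul] at hhx ⊢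
  obtain ⟨j, hj, hpos⟩ : ∃ j ∈ Finset.univ, 0 < d j * (h ⬝ᵥ y j) :=
    Finset.exists_lt_of_sum_lt (by simpa using hhx)
  have hdj : 0 < d j := (hd j).lt_of_ne' fun h0 => by simp [h0] at hpos
  exact Finset.sum_pos' (fun i _ => mul_nonneg (hd i) (hf i))
    ⟨j, hj, mul_pos hdj (hfh j (pos_of_mul_pos_right hpos (hd j)))⟩

lemma smul_mem_coneGen (j : Fin m) {c : ℝ} (hc : 0 ≤ c) : c • y j ∈ ConeGen y :=
  ⟨Pi.single j c, fun i => by by_cases h : i = j <;> simp [h, hc], by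
    simp [Pi.single_apply, ite_smul]⟩

lemma IsExtremeVec.exists_eq_smul_generator (hx : IsExtremeVec (ConeGen y) x) :
    ∃ j, ∃ c : ℝ, 0 < c ∧ x = c • y j := by
  obtain ⟨⟨d, hd, rfl⟩, hx0, hext⟩ := hx
  obtain ⟨j, -, hj⟩ := Finset.exists_ne_zero_of_sum_ne_zero hx0
  have hrest : ∑ i, Function.update d j 0 i • y i ∈ ConeGen y :=
    ⟨_, fun i => by by_cases h : i = j <;> simp [h, hd i], rfl⟩
  have hsplit : ∑ i, d i • y i = d j • y j + ∑ i, Function.update d j 0 i • y i := by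
    rw [← Finset.add_sum_erase _ _ (Finset.mem_univ j),
      ← Finset.add_sum_erase _ (fun i => Function.update d j 0 i • y i) (Finset.mem_univ j)]
    simp only [Function.update_self, zero_smul, zero_add]
    congr 1
    exact Finset.sum_congr rfl fun i hi => by
      rw [Function.update_of_ne (Finset.ne_of_mem_erase hi)]
  obtain ⟨⟨a, ha, hax⟩, -⟩ := hext _ (smul_mem_coneGen j (hd j)) _ hrest hsplit
  have ha0 : a ≠ 0 := by
    rintro rfl
    exact hj (by rw [hax, zero_smul])
  have hdj : d j ≠ 0 := fun h => hj (by rw [h, zero_smul])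
  refine ⟨j, d j / a, div_pos ((hd j).lt_of_ne' hdj) (ha.lt_of_ne' ha0), ?_⟩
  rw [div_eq_inv_mul, mul_smul, hax, inv_smul_smul₀ ha0]

end GeneratedCone

section Circle

/-- The point at angle `θ` on the unit circle at height `1` in `ℝ³`, which spans an extreme ray of
the circular cone. -/
def circlePoint (θ : ℝ) : Fin 3 → ℝ := ![cos θ, sin θ, 1]

lemma circlePoint_add_int_mul_two_pi (θ : ℝ) (k : ℤ) :
    circlePoint (θ + k * (2 * π)) = circlePoint θ := by
  simp only [circlePoint, cos_add_int_mul_two_pi, sin_add_int_mul_two_pi]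

lemma circlePoint_cross_dot (x y z : ℝ) :
    circlePoint (2 * x) ⨯₃ circlePoint (2 * y) ⬝ᵥ circlePoint (2 * z) =
      4 * sin (y - x) * sin (z - y) * sin (z - x) := by
  simp only [circlePoint, cross_apply, vec3_dotProduct, cons_val, cos_two_mul, sin_two_mul, sin_sub]
  have hx := sin_sq_add_cos_sq x
  have hy := sin_sq_add_cos_sq y
  have hz := sin_sq_add_cos_sq z
  grind

lemma circlePoint_tangent (θ φ : ℝ) :
    ![-cos θ, -sin θ, 1] ⬝ᵥ circlePoint φ = 1 - cos (φ - θ) := by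
  simp only [circlePoint, vec3_dotProduct, cons_val, cos_sub]
  ring

lemma circlePoint_recurrence (x t : ℝ) :
    circlePoint (x + 3 * t) = circlePoint x +
      (1 + 2 * cos t) • (circlePoint (x + 2 * t) - circlePoint (x + t)) := by
  have ht := sin_sq_add_cos_sq t
  have hcos : cos (x + 3 * t) = cos x + (1 + 2 * cos t) * (cos (x + 2 * t) - cos (x + t)) := by
    simp only [cos_add, cos_two_mul, sin_two_mul, cos_three_mul, sin_three_mul]
    grind
  have hsin : sin (x + 3 * t) = sin x + (1 + 2 * cos t) * (sin (x + 2 * t) - sin (x + t)) := by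
    simp only [sin_add, cos_two_mul, sin_two_mul, cos_three_mul, sin_three_mul]
    grind
  simp [circlePoint, hcos, hsin]

end Circle

section CyclicIndices

variable {m : ℕ}

lemma natCast_ne_zero_of_lt {k : ℕ} (hk : 0 < k) (hkm : k < m) : (k : ZMod m) ≠ 0 :=
  fun h => (Nat.le_of_dvd hk ((ZMod.natCast_eq_zero_iff _ _).1 h)).not_gt hkm

variable [NeZero m]

lemma eq_of_forall_add_one_eq {α : Type*} (h : ZMod m → α) (v : ZMod m)
    (hstep : ∀ s ≠ v, s + 1 ≠ v → h (s + 1) = h s) : ∀ s ≠ v, h s = h (v + 1) := by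
  have key (n : ℕ) (hn : n + 1 < m) : h (v + 1 + n) = h (v + 1) := by
    induction n with
    | zero => simp
    | succ n ih =>
      rw [← ih (by omega), Nat.cast_succ, ← add_assoc]
      have hne (k : ℕ) (hk : k + 1 < m) : v + 1 + (k : ZMod m) ≠ v := fun h0 =>
        natCast_ne_zero_of_lt k.succ_pos hk (by push_cast; linear_combination h0)
      refine hstep _ (hne n (by omega)) ?_
      have := hne (n + 1) hn
      rwa [Nat.cast_succ, ← add_assoc] at this
  intro s hs
  obtain ⟨n, hn⟩ : ∃ n, (s - v).val = n + 1 :=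
    Nat.exists_eq_add_one_of_ne_zero (by simpa [ZMod.val_eq_zero, sub_eq_zero] using hs)
  have hsn : s = v + 1 + n := by
    have : s - v = ((n + 1 : ℕ) : ZMod m) := by rw [← hn, ZMod.natCast_zmod_val]
    push_cast at this
    linear_combination this
  rw [hsn]
  exact key n (hn ▸ ZMod.val_lt _)

lemma exists_forall_eq_add_mul (g : Equiv.Perm (ZMod m)) {v ε : ZMod m} (hε : IsUnit ε)
    (hstep : ∀ s ≠ v, s + 1 ≠ v → g (s + 1) = g s + ε) : ∃ t, ∀ s, g s = t + ε * s := by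
  have hconst := eq_of_forall_add_one_eq (fun s => g s - ε * s) v fun s hs hs' => by
    simp only [hstep s hs hs']
    ring
  obtain ⟨t, ht⟩ : ∃ t, ∀ s ≠ v, g s = t + ε * s :=
    ⟨_, fun s hs => eq_add_of_sub_eq (hconst s hs)⟩
  refine ⟨t, fun s => ?_⟩
  rcases eq_or_ne s v with rfl | hs
  · obtain ⟨j, hj⟩ := g.surjective (t + ε * s)
    have hjs : j = s := by
      by_contra hne
      rw [ht j hne] at hj
      exact hne (hε.mul_left_cancel (add_left_cancel hj))
    rwa [hjs] at hj
  · exact ht s hs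

end CyclicIndices

section ThreeTermRecurrence

variable {R V W : Type*} [CommRing R] [NoZeroDivisors R] [AddCommGroup V] [Module R V]
  [AddCommGroup W] [Module R W]

lemma map_eq_smul_of_recurrence (T : V →ₗ[R] W) {y : ℕ → V} {z : ℕ → W} {c : ℕ → R} {k : R}
    (hk : k ≠ 0) (hy : ∀ n, y (n + 3) = y n + k • (y (n + 2) - y (n + 1)))
    (hz : ∀ n, z (n + 3) = z n + k • (z (n + 2) - z (n + 1)))
    (hli : LinearIndependent R ![z 1, z 2, z 3])
    (hT : ∀ n, 1 ≤ n → n ≤ 4 → T (y n) = c n • z n) : T (y 0) = c 1 • z 0 := by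
  have hT1 := hT 1 le_rfl (by omega)
  have hT2 := hT 2 (by omega) (by omega)
  have hT3 := hT 3 (by omega) (by omega)
  have hT4 := hT 4 (by omega) le_rfl
  have hrel : (c 4 - c 1) • z 1 + (k * (c 2 - c 4)) • z 2 + (k * (c 4 - c 3)) • z 3 = 0 := by
    have h := congrArg T (hy 1)
    simp only [Nat.reduceAdd, map_add, map_smul, map_sub, hT1, hT2, hT3, hT4, hz 1] at h
    linear_combination (norm := module) h
  have h := Fintype.linearIndependent_iff.1 hli ![c 4 - c 1, k * (c 2 - c 4), k * (c 4 - c 3)]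
    (by simpa [Fin.sum_univ_three] using hrel)
  have h41 : c 4 = c 1 := sub_eq_zero.1 (h 0)
  have h24 : c 2 = c 4 := sub_eq_zero.1 ((mul_eq_zero.1 (h 1)).resolve_left hk)
  have h43 : c 4 = c 3 := sub_eq_zero.1 ((mul_eq_zero.1 (h 2)).resolve_left hk)
  have hy0 : T (y 3) = T (y 0) + k • (T (y 2) - T (y 1)) := by
    rw [← map_sub, ← map_smul, ← map_add, ← hy 0]
  have hz0 := hz 0
  rw [hT1, hT2, hT3, h24, ← h43, h41] at hy0
  simp only [zero_add] at hz0
  rw [hz0] at hy0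
  rw [eq_comm]
  linear_combination (norm := module) hy0

end ThreeTermRecurrence

section RegularPolygon

variable {m : ℕ}

/-- The `a`-th vertex of the regular `m`-gon at height `1` in `ℝ³`, with indices read modulo `m`. -/
def vertex (a : ZMod m) : Fin 3 → ℝ := circlePoint (2 * (a.val * π / m))

lemma sin_natCast_mul_pi_div_pos {k : ℕ} (hk : 0 < k) (hkm : k < m) : 0 < sin (k * π / m) := by
  have hk' : (0 : ℝ) < k := by exact_mod_cast hk
  have hkm' : (k : ℝ) < m := by exact_mod_cast hkm
  have hm : (0 : ℝ) < m := hk'.trans hkm'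
  refine sin_pos_of_pos_of_lt_pi (by positivity) ?_
  rw [div_lt_iff₀ hm, mul_comm]
  gcongr

lemma one_add_two_mul_cos_pos (hm : 5 ≤ m) : 0 < 1 + 2 * cos (2 * π / m) := by
  have hm' : (5 : ℝ) ≤ m := by exact_mod_cast hm
  have hlt : 2 * π / m < π / 2 := by
    rw [div_lt_div_iff₀ (by linarith) two_pos]
    nlinarith [pi_pos]
  have := cos_pos_of_mem_Ioo ⟨(by linarith [pi_pos] : -(π / 2) < 0).trans (by positivity), hlt⟩
  positivity

variable [NeZero m]

lemma vertex_intCast (n : ℤ) : vertex (n : ZMod m) = circlePoint (2 * (n * π / m)) := by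
  obtain ⟨k, hk⟩ : (m : ℤ) ∣ n - (n : ZMod m).val := by
    rw [← ZMod.intCast_eq_intCast_iff_dvd_sub]
    simp
  have hm : (m : ℝ) ≠ 0 := NeZero.ne _
  have hn : (n : ℝ) = (n : ZMod m).val + m * k := by exact_mod_cast eq_add_of_sub_eq' hk
  rw [hn, vertex, ← circlePoint_add_int_mul_two_pi _ k]
  congr 1
  field_simp

lemma vertex_cross_dot_pos {a c : ZMod m} (hca : c ≠ a) (hca' : c ≠ a + 1) :
    0 < vertex a ⨯₃ vertex (a + 1) ⬝ᵥ vertex c := by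
  obtain ⟨a, rfl⟩ := ZMod.intCast_surjective a
  obtain ⟨n, hn, rfl⟩ : ∃ n < m, c = ((a + n : ℤ) : ZMod m) :=
    ⟨(c - a).val, ZMod.val_lt _, by simp⟩
  have hn0 : n ≠ 0 := by
    rintro rfl
    simp at hca
  have hn1 : n ≠ 1 := by
    rintro rfl
    simp at hca'
  have hsub {p q : ℤ} {k : ℕ} (h : q - p = k) : q * π / m - p * π / m = k * π / m := by
    have h' : (q : ℝ) - p = k := by exact_mod_cast h
    rw [← h']
    ring
  obtain ⟨k, rfl⟩ : ∃ k, n = k + 1 := Nat.exists_eq_add_one_of_ne_zero hn0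
  have hsucc : (a : ZMod m) + 1 = ((a + 1 : ℤ) : ZMod m) := by push_cast; rfl
  rw [hsucc, vertex_intCast, vertex_intCast, vertex_intCast, circlePoint_cross_dot,
    hsub (k := 1) (by simp), hsub (k := k) (by push_cast; ring), hsub (k := k + 1) (by simp)]
  have := sin_natCast_mul_pi_div_pos (m := m) one_pos (by omega)
  have := sin_natCast_mul_pi_div_pos (m := m) (k := k) (by omega) (by omega)
  have := sin_natCast_mul_pi_div_pos k.succ_pos hn
  positivity

lemma vertex_cross_dot_nonneg (a c : ZMod m) :
    0 ≤ vertex a ⨯₃ vertex (a + 1) ⬝ᵥ vertex c := by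
  rcases eq_or_ne c a with rfl | hca
  · rw [cross_dot_left]
  rcases eq_or_ne c (a + 1) with rfl | hca'
  · rw [cross_dot_right]
  exact (vertex_cross_dot_pos hca hca').le

lemma vertex_cross_dot_natCast_pos (hm : 3 ≤ m) (a : ZMod m) :
    0 < vertex (a + ((1 : ℕ) : ZMod m)) ⨯₃ vertex (a + ((2 : ℕ) : ZMod m)) ⬝ᵥ
      vertex (a + ((3 : ℕ) : ZMod m)) := by
  have h1 : ((1 : ℕ) : ZMod m) ≠ 0 := natCast_ne_zero_of_lt one_pos (by omega)
  have h2 : ((2 : ℕ) : ZMod m) ≠ 0 := natCast_ne_zero_of_lt two_pos (by omega)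
  rw [show a + ((2 : ℕ) : ZMod m) = a + ((1 : ℕ) : ZMod m) + 1 by push_cast; ring]
  refine vertex_cross_dot_pos (fun h => h2 ?_) fun h => h1 ?_ <;>
    push_cast at h ⊢ <;> linear_combination h

lemma exists_supporting_functional_vertex (v : ZMod m) :
    ∃ f : Fin 3 → ℝ, f ⬝ᵥ vertex v = 0 ∧ ∀ q ≠ v, 0 < f ⬝ᵥ vertex q := by
  obtain ⟨v, rfl⟩ := ZMod.intCast_surjective v
  refine ⟨![-cos (2 * (v * π / m)), -sin (2 * (v * π / m)), 1], ?_, fun q hq => ?_⟩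
  · rw [vertex_intCast, circlePoint_tangent, sub_self, cos_zero, sub_self]
  obtain ⟨q, rfl⟩ := ZMod.intCast_surjective q
  rw [vertex_intCast, circlePoint_tangent, sub_pos]
  refine (cos_le_one _).lt_of_ne fun h => hq ?_
  obtain ⟨k, hk⟩ := (cos_eq_one_iff _).1 h
  have hm : (m : ℝ) ≠ 0 := NeZero.ne _
  have hqv : (q - v : ℝ) = m * k := by
    field_simp at hk
    linear_combination -hk
  rw [eq_comm, ZMod.intCast_eq_intCast_iff_dvd_sub]
  exact ⟨k, by exact_mod_cast hqv⟩

lemma vertex_recurrence (a : ZMod m) :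
    vertex (a + 3) = vertex a + (1 + 2 * cos (2 * π / m)) • (vertex (a + 2) - vertex (a + 1)) := by
  obtain ⟨a, rfl⟩ := ZMod.intCast_surjective a
  have h := circlePoint_recurrence (2 * (a * π / m)) (2 * π / m)
  have hshift (k : ℕ) : vertex ((a : ZMod m) + (k : ZMod m)) =
      circlePoint (2 * (a * π / m) + k * (2 * π / m)) := by
    rw [← Int.cast_natCast k, ← Int.cast_add, vertex_intCast]
    congr 1
    push_cast
    ring
  have h1 := hshift 1
  have h2 := hshift 2
  have h3 := hshift 3
  push_cast [one_mul] at h1 h2 h3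
  rwa [← h1, ← h2, ← h3, ← vertex_intCast] at h

lemma vertex_add_mul_recurrence {ε : ZMod m} (hε : ε = 1 ∨ ε = -1) (a : ZMod m) (n : ℕ) :
    vertex (a + ε * ((n + 3 : ℕ) : ZMod m)) = vertex (a + ε * (n : ZMod m)) +
      (1 + 2 * cos (2 * π / m)) •
        (vertex (a + ε * ((n + 2 : ℕ) : ZMod m)) - vertex (a + ε * ((n + 1 : ℕ) : ZMod m))) := by
  push_cast
  rcases hε with rfl | rfl
  · simpa only [one_mul, add_assoc] using vertex_recurrence (a + (n : ZMod m))
  · have h := vertex_recurrence (a + -1 * ((n : ZMod m) + 3))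
    rw [show a + -1 * (n + 3) + 3 = a + -1 * n by ring,
      show a + -1 * (n + 3) + 2 = a + -1 * (n + 1) by ring,
      show a + -1 * (n + 3) + 1 = a + -1 * (n + 2) by ring] at h
    linear_combination (norm := module) -h

lemma Kcirc_eq_coneGen_vertex :
    Kcirc m = ConeGen fun j : Fin m => vertex ((j : ZMod m) + 1) := by
  have h (j : Fin m) : vertex ((j : ZMod m) + 1) =
      ![cos (2 * ((j : ℕ) + 1) * π / m), sin (2 * ((j : ℕ) + 1) * π / m), 1] := by
    have := vertex_intCast (m := m) ((j : ℕ) + 1)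
    push_cast at this
    rw [this, circlePoint, ← mul_div_assoc, ← mul_assoc]
  simp only [Kcirc, h]

lemma vertex_mem_Kcirc (a : ZMod m) : vertex a ∈ Kcirc m := by
  rw [Kcirc_eq_coneGen_vertex]
  have := smul_mem_coneGen (y := fun j : Fin m => vertex ((j : ZMod m) + 1))
    ⟨(a - 1).val, ZMod.val_lt _⟩ zero_le_one
  simpa using this

lemma eq_add_one_or_of_cross_dot_nonneg {a b u : ZMod m} (hab : a ≠ b)
    (h : ∀ q ≠ u, 0 ≤ vertex a ⨯₃ vertex b ⬝ᵥ vertex q) :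
    b = a + 1 ∨ a = u - 1 ∧ b = u + 1 := by
  refine or_iff_not_imp_left.2 fun hb => ?_
  have hsucc : vertex a ⨯₃ vertex b ⬝ᵥ vertex (a + 1) < 0 := by
    rw [cross_dot_rotate, cross_dot_rotate, cross_dot_swap, neg_lt_zero]
    exact vertex_cross_dot_pos hab.symm hb
  have hpred : vertex a ⨯₃ vertex b ⬝ᵥ vertex (b - 1) < 0 := by
    rw [cross_dot_rotate, cross_dot_swap, neg_lt_zero]
    have := vertex_cross_dot_pos (a := b - 1) (c := a) (fun h => hb (by rw [h]; ring))
      (by rwa [sub_add_cancel])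
    rwa [sub_add_cancel] at this
  have hau : a + 1 = u := by_contra fun hne => (h _ hne).not_gt hsucc
  have hbu : b - 1 = u := by_contra fun hne => (h _ hne).not_gt hpred
  exact ⟨eq_sub_of_add_eq hau, eq_add_of_sub_eq hbu⟩

lemma cross_dot_nonpos_of_supporting {u : ZMod m} {f w : Fin 3 → ℝ}
    (hf : ∀ q ≠ u, 0 < f ⬝ᵥ vertex q) (hw : w ∈ Kcirc m) (hfw : f ⬝ᵥ w = 0) :
    vertex (u - 1) ⨯₃ vertex (u + 1) ⬝ᵥ w ≤ 0 := by
  rcases subsingleton_or_nontrivial (ZMod m) with hsub | hnontriv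
  · simp [Subsingleton.elim (u - 1) (u + 1)]
  by_contra! hbeyond
  rw [Kcirc_eq_coneGen_vertex] at hw
  have hpred_edge (q : ZMod m) : 0 ≤ vertex (u - 1) ⨯₃ vertex u ⬝ᵥ vertex q := by
    have := vertex_cross_dot_nonneg (u - 1) q
    rwa [sub_add_cancel] at this
  have hchord : vertex (u - 1) ⨯₃ vertex (u + 1) ⬝ᵥ vertex u ≤ 0 := by
    rw [cross_dot_rotate, cross_dot_swap, neg_nonpos]
    exact vertex_cross_dot_nonneg _ _
  have hsucc_pos : 0 < vertex u ⨯₃ vertex (u + 1) ⬝ᵥ w := by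
    refine dotProduct_pos_of_mem_coneGen (fun j => vertex_cross_dot_nonneg _ _)
      (fun j hj => vertex_cross_dot_pos (fun hq => ?_) fun hq => ?_) hw hbeyond
    · exact (hq ▸ hj).not_ge hchord
    · exact (hq ▸ hj).ne' (cross_dot_right _ _)
  have hfu : 0 < f ⬝ᵥ vertex u := by
    -- The Cramer rule writes a multiple of `f ⬝ᵥ vertex u` through the values of `f` at
    -- `vertex (u ± 1)` and `w`.
    have hcramer := cross_dot_mul_dotProduct (vertex (u - 1)) (vertex (u + 1)) w (vertex u) f
    have hpred_nonneg : 0 ≤ vertex (u - 1) ⨯₃ vertex u ⬝ᵥ w :=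
      dotProduct_nonneg_of_mem_coneGen (fun j => hpred_edge _) hw
    have hsucc_term := mul_pos hsucc_pos (hf (u - 1) (by simp))
    have hpred_term := mul_nonneg hpred_nonneg (hf (u + 1) (by simp)).le
    rw [hfw, mul_zero, add_zero] at hcramer
    exact pos_of_mul_pos_right (by linarith) hbeyond.le
  have hfpos (q : ZMod m) : 0 < f ⬝ᵥ vertex q := by
    rcases eq_or_ne q u with rfl | hq
    exacts [hfu, hf q hq]
  exact hfw.not_gt
    (dotProduct_pos_of_mem_coneGen (fun j => (hfpos _).le) (fun j _ => hfpos _) hw hbeyond)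

end RegularPolygon

section RayPermutation

variable {m : ℕ} {A : Matrix (Fin 3) (Fin 3) ℝ} {g : Equiv.Perm (ZMod m)} {v : ZMod m}

/-- `A` sends the ray through the `s`-th vertex onto the ray through the `g s`-th one, for all `s`
except possibly `v`; nothing is required of the image of the vertex `v`. -/
def MapsRaysExcept (A : Matrix (Fin 3) (Fin 3) ℝ) (g : Equiv.Perm (ZMod m)) (v : ZMod m) : Prop :=
  ∀ s ≠ v, ∃ c : ℝ, 0 < c ∧ A *ᵥ vertex s = c • vertex (g s)

namespace MapsRaysExcept

lemma exists_det_mul_cross_dot_mulVec (hA : MapsRaysExcept A g v) {s r : ZMod m} (hs : s ≠ v)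
    (hr : r ≠ v) : ∃ c : ℝ, 0 < c ∧ ∀ x, A.det * (vertex s ⨯₃ vertex r ⬝ᵥ x) =
      c * (vertex (g s) ⨯₃ vertex (g r) ⬝ᵥ A *ᵥ x) := by
  obtain ⟨c, hc, hAs⟩ := hA s hs
  obtain ⟨d, hd, hAr⟩ := hA r hr
  refine ⟨c * d, mul_pos hc hd, fun x => ?_⟩
  rw [← cross_dot_mulVec, hAs, hAr, LinearMap.map_smul₂, map_smul, smul_smul, smul_dotProduct,
    smul_eq_mul]

lemma exists_det_mul_cross_dot (hA : MapsRaysExcept A g v) {s r k : ZMod m} (hs : s ≠ v)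
    (hr : r ≠ v) (hk : k ≠ v) : ∃ c : ℝ, 0 < c ∧ A.det * (vertex s ⨯₃ vertex r ⬝ᵥ vertex k) =
      c * (vertex (g s) ⨯₃ vertex (g r) ⬝ᵥ vertex (g k)) := by
  obtain ⟨c, hc, h⟩ := hA.exists_det_mul_cross_dot_mulVec hs hr
  obtain ⟨d, hd, hAk⟩ := hA k hk
  exact ⟨c * d, mul_pos hc hd, by rw [h, hAk, dotProduct_smul, smul_eq_mul, mul_assoc]⟩

lemma linearIndependent_of_det_ne_zero (hA : MapsRaysExcept A g v) (hdet : A.det ≠ 0)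
    {s r k : ZMod m} (hs : s ≠ v) (hr : r ≠ v) (hk : k ≠ v)
    (h : vertex s ⨯₃ vertex r ⬝ᵥ vertex k ≠ 0) :
    LinearIndependent ℝ ![vertex (g s), vertex (g r), vertex (g k)] := by
  obtain ⟨c, -, hc⟩ := hA.exists_det_mul_cross_dot hs hr hk
  exact linearIndependent_of_cross_dot_ne_zero (right_ne_zero_of_mul (hc ▸ mul_ne_zero hdet h))

variable [NeZero m]

lemma det_ne_zero (hA : MapsRaysExcept A g v) (hm : 4 ≤ m) : A.det ≠ 0 := by
  have hne (k : ℕ) (hk : 0 < k) (hkm : k < m) : g.symm (g v + k) ≠ v := fun h => by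
    rw [Equiv.symm_apply_eq, add_eq_left] at h
    exact natCast_ne_zero_of_lt hk hkm h
  obtain ⟨c, hc, h⟩ := hA.exists_det_mul_cross_dot (hne 1 one_pos (by omega))
    (hne 2 two_pos (by omega)) (hne 3 three_pos (by omega))
  simp only [Equiv.apply_symm_apply] at h
  have hpos := vertex_cross_dot_natCast_pos (by omega) (g v)
  exact left_ne_zero_of_mul (h.trans_ne (mul_pos hc hpos).ne')

lemma exists_supporting_functional (hA : MapsRaysExcept A g v) (hdet : A.det ≠ 0) :
    ∃ f : Fin 3 → ℝ, f ⬝ᵥ A *ᵥ vertex v = 0 ∧ ∀ q ≠ g v, 0 < f ⬝ᵥ vertex q := by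
  obtain ⟨f, hfv, hf⟩ := exists_supporting_functional_vertex v
  have hpull (x : Fin 3 → ℝ) : (f ᵥ* A⁻¹) ⬝ᵥ A *ᵥ x = f ⬝ᵥ x := by
    rw [← dotProduct_mulVec, mulVec_mulVec, nonsing_inv_mul _ hdet.isUnit, one_mulVec]
  refine ⟨f ᵥ* A⁻¹, by rw [hpull, hfv], fun q hq => ?_⟩
  obtain ⟨s, rfl⟩ := g.surjective q
  have hs : s ≠ v := fun h => hq (congrArg g h)
  obtain ⟨c, hc, hAs⟩ := hA s hs
  have hpos := hf s hs
  rw [← hpull, hAs, dotProduct_smul, smul_eq_mul] at hpos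
  exact pos_of_mul_pos_right hpos hc.le

lemma apply_eq_apply_add_one (hA : MapsRaysExcept A g v) (hdet : A.det ≠ 0)
    (hv : A *ᵥ vertex v ∈ Kcirc m) {s r : ZMod m} (hs : s ≠ v) (hr : r ≠ v) (hsr : s ≠ r)
    (hedge : ∀ k, k ≠ s → k ≠ r → 0 < A.det * (vertex s ⨯₃ vertex r ⬝ᵥ vertex k)) :
    g r = g s + 1 := by
  have hside : ∀ q ≠ g v, 0 ≤ vertex (g s) ⨯₃ vertex (g r) ⬝ᵥ vertex q := by
    intro q hq
    obtain ⟨k, rfl⟩ := g.surjective q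
    rcases eq_or_ne k s with rfl | hks
    · rw [cross_dot_left]
    rcases eq_or_ne k r with rfl | hkr
    · rw [cross_dot_right]
    obtain ⟨c, hc, h⟩ := hA.exists_det_mul_cross_dot hs hr fun h => hq (congrArg g h)
    exact (pos_of_mul_pos_right (h ▸ hedge k hks hkr) hc.le).le
  refine (eq_add_one_or_of_cross_dot_nonneg (g.injective.ne hsr) hside).resolve_right ?_
  rintro ⟨hgs, hgr⟩
  obtain ⟨f, hfv, hf⟩ := hA.exists_supporting_functional hdet
  obtain ⟨c, hc, h⟩ := hA.exists_det_mul_cross_dot_mulVec hs hr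
  have hpos : 0 < c * (vertex (g s) ⨯₃ vertex (g r) ⬝ᵥ A *ᵥ vertex v) :=
    h _ ▸ hedge v hs.symm hr.symm
  have hnonpos := cross_dot_nonpos_of_supporting hf hv hfv
  rw [← hgs, ← hgr] at hnonpos
  exact (pos_of_mul_pos_right hpos hc.le).not_ge hnonpos

lemma exists_apply_add_one_eq (hA : MapsRaysExcept A g v) (hdet : A.det ≠ 0)
    (hv : A *ᵥ vertex v ∈ Kcirc m) :
    ∃ ε : ZMod m, (ε = 1 ∨ ε = -1) ∧ ∀ s ≠ v, s + 1 ≠ v → g (s + 1) = g s + ε := by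
  rcases subsingleton_or_nontrivial (ZMod m) with hsub | hnontriv
  · exact ⟨1, Or.inl rfl, fun s hs => absurd (Subsingleton.elim s v) hs⟩
  have hne (s : ZMod m) : s ≠ s + 1 := by simp
  rcases hdet.lt_or_gt with hneg | hpos
  · refine ⟨-1, Or.inr rfl, fun s hs hs' => ?_⟩
    have := hA.apply_eq_apply_add_one hdet hv hs' hs (hne s).symm fun k hk' hk => by
      rw [cross_dot_swap]
      exact mul_pos_of_neg_of_neg hneg (neg_lt_zero.2 (vertex_cross_dot_pos hk hk'))
    rw [this, add_neg_cancel_right]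
  · exact ⟨1, Or.inl rfl, fun s hs hs' => hA.apply_eq_apply_add_one hdet hv hs hs' (hne s)
      fun k hk hk' => mul_pos hpos (vertex_cross_dot_pos hk hk')⟩

theorem exists_mulVec_vertex_eq_smul (hA : MapsRaysExcept A g v) (hm : 5 ≤ m)
    (hv : A *ᵥ vertex v ∈ Kcirc m) : ∃ c : ℝ, 0 < c ∧ A *ᵥ vertex v = c • vertex (g v) := by
  have hdet := hA.det_ne_zero (by omega)
  obtain ⟨ε, hε, hstep⟩ := hA.exists_apply_add_one_eq hdet hv
  have hunit : IsUnit ε := by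
    rcases hε with rfl | rfl
    exacts [isUnit_one, isUnit_one.neg]
  obtain ⟨t, hg⟩ := exists_forall_eq_add_mul g hunit hstep
  have hne (n : ℕ) (hn : 0 < n) (hn' : n ≤ 4) : v + (n : ZMod m) ≠ v := by
    rw [Ne, add_eq_left]
    exact natCast_ne_zero_of_lt hn (by omega)
  have hrec (n : ℕ) : vertex (v + ((n + 3 : ℕ) : ZMod m)) = vertex (v + (n : ZMod m)) +
      (1 + 2 * cos (2 * π / m)) •
        (vertex (v + ((n + 2 : ℕ) : ZMod m)) - vertex (v + ((n + 1 : ℕ) : ZMod m))) := by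
    simpa only [one_mul] using vertex_add_mul_recurrence (Or.inl rfl) v n
  have hrec_image (n : ℕ) : vertex (g (v + ((n + 3 : ℕ) : ZMod m))) =
      vertex (g (v + (n : ZMod m))) + (1 + 2 * cos (2 * π / m)) •
        (vertex (g (v + ((n + 2 : ℕ) : ZMod m))) - vertex (g (v + ((n + 1 : ℕ) : ZMod m)))) := by
    simpa only [hg, mul_add ε v, add_assoc] using vertex_add_mul_recurrence hε (t + ε * v) n
  have hli : LinearIndependent ℝ ![vertex (g (v + ((1 : ℕ) : ZMod m))),
      vertex (g (v + ((2 : ℕ) : ZMod m))), vertex (g (v + ((3 : ℕ) : ZMod m)))] :=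
    hA.linearIndependent_of_det_ne_zero hdet (hne 1 one_pos (by omega)) (hne 2 two_pos (by omega))
      (hne 3 three_pos (by omega)) (vertex_cross_dot_natCast_pos (by omega) v).ne'
  choose! c hc hAc using hA
  have h := map_eq_smul_of_recurrence A.mulVecLin
    (y := fun n => vertex (v + (n : ZMod m))) (z := fun n => vertex (g (v + (n : ZMod m))))
    (c := fun n => c (v + (n : ZMod m))) (one_add_two_mul_cos_pos hm).ne' hrec hrec_image hli
    fun n hn hn' => hAc _ (hne n hn hn')
  rw [Nat.cast_zero, add_zero, mulVecLin_apply] at h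
  exact ⟨_, hc _ (hne 1 one_pos (by omega)), h⟩

end MapsRaysExcept

end RayPermutation

lemma exists_pos_smul_eq_smul_iff {K M : Type*} [Field K] [LinearOrder K] [IsStrictOrderedRing K]
    [AddCommGroup M] [Module K M] {a b : K} {u w : M} (ha : 0 < a) (hb : 0 < b) :
    (∃ c : K, 0 < c ∧ a • u = c • b • w) ↔ ∃ c : K, 0 < c ∧ u = c • w := by
  constructor
  · rintro ⟨c, hc, h⟩
    refine ⟨a⁻¹ * (c * b), by positivity, ?_⟩
    rw [mul_smul, mul_smul, eq_inv_smul_iff₀ ha.ne', h]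
  · rintro ⟨c, hc, rfl⟩
    refine ⟨a * c / b, by positivity, ?_⟩
    rw [smul_smul, smul_smul, div_mul_cancel₀ _ hb.ne']

section ExtremeVectors

variable {m : ℕ} [NeZero m]

lemma exists_equiv_vertex_of_isExtremeVec {x : Fin m → Fin 3 → ℝ}
    (hext : ∀ i, IsExtremeVec (Kcirc m) (x i))
    (hnp : ∀ i j, i ≠ j → ∀ c : ℝ, x j ≠ c • x i) :
    ∃ (p : Fin m ≃ ZMod m) (e : Fin m → ℝ), ∀ i, 0 < e i ∧ x i = e i • vertex (p i) := by
  have hray (i : Fin m) : ∃ (a : ZMod m) (e : ℝ), 0 < e ∧ x i = e • vertex a := by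
    have := hext i
    rw [Kcirc_eq_coneGen_vertex] at this
    obtain ⟨j, e, he⟩ := this.exists_eq_smul_generator
    exact ⟨_, e, he⟩
  choose p e he hx using hray
  have hp : p.Injective := fun i j hij => by
    by_contra hne
    refine hnp i j hne (e j / e i) ?_
    rw [hx i, hx j, hij, smul_smul, div_mul_cancel₀ _ (he i).ne']
  have hbij : p.Bijective := (Fintype.bijective_iff_injective_and_card p).2 ⟨hp, by simp⟩
  exact ⟨Equiv.ofBijective p hbij, e, fun i => ⟨he i, hx i⟩⟩

theorem KNonneg.exists_mulVec_eq_smul_of_forall_ne (hm : 5 ≤ m) {A : Matrix (Fin 3) (Fin 3) ℝ}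
    (hA : KNonneg (Kcirc m) A) {x : Fin m → Fin 3 → ℝ} (hext : ∀ i, IsExtremeVec (Kcirc m) (x i))
    (hnp : ∀ i j, i ≠ j → ∀ c : ℝ, x j ≠ c • x i) (σ : Equiv.Perm (Fin m)) (v : Fin m)
    (hσ : ∀ i ≠ v, ∃ c : ℝ, 0 < c ∧ A *ᵥ x i = c • x (σ i)) :
    ∃ c : ℝ, 0 < c ∧ A *ᵥ x v = c • x (σ v) := by
  obtain ⟨p, e, hx⟩ := exists_equiv_vertex_of_isExtremeVec hext hnp
  have hrescale (i : Fin m) : (∃ c : ℝ, 0 < c ∧ A *ᵥ x i = c • x (σ i)) ↔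
      ∃ c : ℝ, 0 < c ∧ A *ᵥ vertex (p i) = c • vertex (p (σ i)) := by
    rw [(hx i).2, (hx (σ i)).2, mulVec_smul]
    exact exists_pos_smul_eq_smul_iff (hx i).1 (hx (σ i)).1
  have hrays : MapsRaysExcept A (p.permCongr σ) (p v) := by
    intro s hs
    obtain ⟨i, rfl⟩ := p.surjective s
    simpa using (hrescale i).1 (hσ i fun h => hs (congrArg p h))
  refine (hrescale v).2 ?_
  simpa using hrays.exists_mulVec_vertex_eq_smul hm (hA _ (vertex_mem_Kcirc _))

end ExtremeVectors

theorem stmt_12_general (m : ℕ) (hm : 5 ≤ m) :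
    ¬ ∃ (A : Matrix (Fin 3) (Fin 3) ℝ) (x : Fin m → Fin 3 → ℝ),
      KNonneg (Kcirc m) A ∧
      (∀ i : Fin m, IsExtremeVec (Kcirc m) (x i)) ∧
      (∀ i j : Fin m, i ≠ j → ∀ c : ℝ, x j ≠ c • x i) ∧
      (∀ i : Fin m, ∀ h : (i : ℕ) + 1 < m,
        ∃ c : ℝ, 0 < c ∧ A.mulVec (x i) = c • x ⟨(i : ℕ) + 1, h⟩) ∧
      (∃ α β : ℝ, β ≠ 0 ∧
        A.mulVec (x ⟨m - 1, Nat.sub_one_lt_of_lt hm⟩) =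
          α • x ⟨0, Nat.zero_lt_of_lt hm⟩ + β • x ⟨1, Nat.one_lt_ofNat.trans_le hm⟩) := by
  rintro ⟨A, x, hA, hext, hnp, hcycle, α, β, hβ, hlast⟩
  obtain ⟨n, rfl⟩ : ∃ n, m = n + 1 := ⟨m - 1, by omega⟩
  have hshift : ∀ i ≠ Fin.last n, ∃ c : ℝ, 0 < c ∧ A *ᵥ x i = c • x (finRotate _ i) := by
    intro i hi
    have hin : (i : ℕ) < n := Fin.val_lt_last hi
    rw [show finRotate (n + 1) i = ⟨i + 1, by omega⟩ from finRotate_of_lt hin]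
    exact hcycle i (by omega)
  obtain ⟨c, -, hc⟩ := hA.exists_mulVec_eq_smul_of_forall_ne hm hext hnp _ _ hshift
  rw [finRotate_last] at hc
  refine hnp ⟨0, by omega⟩ ⟨1, by omega⟩ (by simp) ((c - α) / β) ?_
  have hβx : β • x ⟨1, by omega⟩ = (c - α) • x 0 := by
    rw [sub_smul, ← hc]
    exact eq_sub_of_add_eq' hlast.symm
  rw [div_eq_inv_mul, mul_smul, eq_inv_smul_iff₀ hβ]
  exact hβx

/-- For `m ≥ 5` there is no `K`-primitive matrix `A` (for `K = Kcirc m`) together with an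
enumeration `x_1, …, x_m` of pairwise non-proportional extreme vectors of `K` such that
`A x_i` is a positive multiple of `x_{i+1}` for `i = 1, …, m-1` and
`A x_m = α x_1 + β x_2` with `α, β > 0`. -/
theorem stmt_12 (m : ℕ) (hm : 5 ≤ m) :
    ¬ ∃ (A : Matrix (Fin 3) (Fin 3) ℝ) (x : Fin m → Fin 3 → ℝ),
      KPrimitive (Kcirc m) A ∧
      (∀ i : Fin m, IsExtremeVec (Kcirc m) (x i)) ∧
      (∀ i j : Fin m, i ≠ j → ∀ c : ℝ, x j ≠ c • x i) ∧
      (∀ i : Fin m, ∀ h : (i : ℕ) + 1 < m,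
        ∃ c : ℝ, 0 < c ∧ A.mulVec (x i) = c • x ⟨(i : ℕ) + 1, h⟩) ∧
      (∃ α β : ℝ, 0 < α ∧ 0 < β ∧
        A.mulVec (x ⟨m - 1, by omega⟩) =
          α • x ⟨0, by omega⟩ + β • x ⟨1, by omega⟩) := by
  rintro ⟨A, x, hA, hext, hnp, hcycle, α, β, -, hβ, hlast⟩
  exact stmt_12_general m hm ⟨A, x, hA.1, hext, hnp, hcycle, α, β, hβ.ne', hlast⟩
end
end

section
/- Let m, n be integers with 3 ≤ n ≤ m. Then: (a) for every K ∈ P(m,n) and every K-primitive matrix A, γ(A) ≤ (n−1)(m−1) + 1; (b) if m is even, or m and n are both odd, then there exist K ∈ P(m,n) and a K-primitive matrix A with γ(A) = (n−1)(m−1) + 1, so the maximum of γ(K) over K ∈ P(m,n) equals (n−1)(m−1) + 1; (c) if m is odd and n is even, then there exist K ∈ P(m,n) and a K-primitive matrix A with γ(A) ≥ (n−1)(m−1), so the maximum of γ(K) over K ∈ P(m,n) is at least (n−1)(m−1) and at most (n−1)(m−1) + 1. -/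
open Matrix Set Real

noncomputable section

/-!
*Upper bound.* Join two extreme rays `i`, `j` by an edge when `y j` lies in the face generated by
`A y i`. If some `i` starts no walk onto a circuit of length `l < m` with at most `m` edges in
total, the digraph is a permutation, which forces every generator into the interior. Otherwise, for
`x` on such a circuit, the spans of the faces generated by `x`, `A ^ l x`, `A ^ (2 * l) x`, …
increase, and by Cayley–Hamilton the `n`-th of them is the whole space.

*Sharpness.* Take the cone over `x, A x, …, A ^ (m - 1) x`, where
`A ^ m x = c A x + (1 - c) x` and the characteristic polynomial `p` of `A` is a divisor of
`X ^ m - c X - (1 - c)`. If the first coefficients of the power series `1 / p` are nonpositive, then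
minus a suitable coefficient of `(q mod p) / p` is a functional that is nonnegative on the cone and
vanishes at `n - 1` consecutive points of the orbit; by the recurrence it still vanishes at
`A ^ k x` for a large `k`. Such `p` are perturbations of `(X - 1) ∏ (X - ω) (X - ω⁻¹)`, over the
roots of unity `ω ≠ 1` of order dividing `m` that are nearest to `1`; the coefficients of the
inverse of this product are, up to sign, Gaussian binomials at a root of unity, hence quotients of
products of sines. If `n` is even there is a further root near `-1`, and `2 * (m / 2)` replaces `m`.
-/

open scoped Pointwise Topology

section FaceSpan

variable {E : Type*} [AddCommGroup E] [Module ℝ E]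

/-- The linear span of the face of `C` generated by `x`, when `C` is a finitely generated cone and
`x ∈ C`. It is encoded dually, as the common kernel of the functionals that are nonnegative on `C`
and vanish at `x`. -/
def faceSpan (C : PointedCone ℝ E) (x : E) : Submodule ℝ E :=
  ⨅ f : {f : Module.Dual ℝ E // (∀ y ∈ C, 0 ≤ f y) ∧ f x = 0}, LinearMap.ker f.1

variable {C : PointedCone ℝ E} {x y : E}

lemma mem_faceSpan :
    y ∈ faceSpan C x ↔ ∀ f : Module.Dual ℝ E, (∀ z ∈ C, 0 ≤ f z) → f x = 0 → f y = 0 := by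
  simp [faceSpan]

lemma self_mem_faceSpan : x ∈ faceSpan C x :=
  mem_faceSpan.2 fun _ _ hx ↦ hx

lemma faceSpan_le_of_mem (h : y ∈ faceSpan C x) : faceSpan C y ≤ faceSpan C x := fun _ hz ↦
  mem_faceSpan.2 fun f hf hx ↦ mem_faceSpan.1 hz f hf (mem_faceSpan.1 h f hf hx)

lemma mem_faceSpan_add_left (hx : x ∈ C) (hy : y ∈ C) : x ∈ faceSpan C (x + y) :=
  mem_faceSpan.2 fun f hf h ↦ by
    rw [map_add] at h
    linarith [hf x hx, hf y hy]

lemma map_mem_faceSpan {T : E →ₗ[ℝ] E} (hT : ∀ z ∈ C, T z ∈ C) (h : y ∈ faceSpan C x) :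
    T y ∈ faceSpan C (T x) :=
  mem_faceSpan.2 fun f hf hx ↦ mem_faceSpan.1 h (f ∘ₗ T) (fun z hz ↦ hf _ (hT z hz)) hx

lemma mem_hull_inter_faceSpan {S : Set E} (hS : S ⊆ C) (hx : x ∈ PointedCone.hull ℝ S) :
    x ∈ PointedCone.hull ℝ (S ∩ faceSpan C x) := by
  have hSC : PointedCone.hull ℝ S ≤ C := Submodule.span_le.2 hS
  induction hx using Submodule.span_induction with
  | mem z hz => exact PointedCone.subset_hull ⟨hz, self_mem_faceSpan⟩
  | zero => exact zero_mem _
  | add y z hy hz ihy ihz =>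
    have hyz := faceSpan_le_of_mem (mem_faceSpan_add_left (hSC hy) (hSC hz))
    have hzy := faceSpan_le_of_mem (mem_faceSpan_add_left (hSC hz) (hSC hy))
    rw [add_comm] at hzy
    exact add_mem (Submodule.span_mono (by gcongr) ihy)
      (Submodule.span_mono (by gcongr) ihz)
  | smul r y _ ih =>
    rcases eq_or_ne r 0 with rfl | hr
    · simp
    · have hmem : y ∈ faceSpan C (r • y) := by
        refine mem_faceSpan.2 fun f _ h0 ↦ ?_
        rw [LinearMap.map_smul_of_tower] at h0
        exact (smul_eq_zero_iff_right hr).1 h0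
      exact Submodule.smul_mem _ r
        (Submodule.span_mono (by gcongr; exact faceSpan_le_of_mem hmem) ih)

lemma exists_mem_faceSpan_of_mem_hull {S : Set E} (hS : S ⊆ C) (hx : x ∈ PointedCone.hull ℝ S)
    (hx0 : x ≠ 0) : ∃ y ∈ S, y ∈ faceSpan C x := by
  by_contra! h
  have hempty : S ∩ faceSpan C x = ∅ := Set.eq_empty_iff_forall_notMem.2 fun y hy ↦ h y hy.1 hy.2
  have hx' := mem_hull_inter_faceSpan hS hx
  rw [hempty] at hx'
  exact hx0 (by simpa using hx')

end FaceSpan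

section Interior

variable {E : Type*} [AddCommGroup E] [Module ℝ E] [TopologicalSpace E] [IsTopologicalAddGroup E]
  [ContinuousSMul ℝ E] {C : PointedCone ℝ E} {x : E}

lemma pos_of_mem_interior {f : Module.Dual ℝ E} (hf0 : f ≠ 0) (hf : ∀ y ∈ C, 0 ≤ f y)
    (hx : x ∈ interior (C : Set E)) : 0 < f x := by
  obtain ⟨v, hv⟩ : ∃ v, f v ≠ 0 := DFunLike.ne_iff.1 hf0
  have hlim : Filter.Tendsto (fun t : ℝ ↦ x - (t * f v) • v) (𝓝[>] 0) (𝓝 x) := by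
    have hcont : Continuous fun t : ℝ ↦ x - (t * f v) • v := by fun_prop
    simpa using (hcont.tendsto 0).mono_left nhdsWithin_le_nhds
  obtain ⟨t, hmem, ht⟩ := ((hlim.eventually (mem_interior_iff_mem_nhds.1 hx)).and
    self_mem_nhdsWithin).exists
  have hnonneg : 0 ≤ f x - t * (f v * f v) := by simpa [mul_assoc] using hf _ hmem
  have hpos : 0 < t * (f v * f v) := mul_pos ht (mul_self_pos.2 hv)
  linarith

lemma exists_dual_eq_zero_of_notMem_interior (hC : (interior (C : Set E)).Nonempty) (hx : x ∈ C)
    (hxi : x ∉ interior (C : Set E)) :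
    ∃ f : Module.Dual ℝ E, f ≠ 0 ∧ (∀ y ∈ C, 0 ≤ f y) ∧ f x = 0 := by
  obtain ⟨f, hf⟩ := geometric_hahn_banach_open_point C.convex.interior isOpen_interior hxi
  have hle : ∀ y ∈ C, f y ≤ f x := fun y hy ↦ by
    have hy' : y ∈ closure (interior (C : Set E)) := by
      rw [C.convex.closure_interior_eq_closure_of_nonempty_interior hC]
      exact subset_closure hy
    exact closure_minimal (fun z hz ↦ (hf z hz).le) (isClosed_le f.continuous continuous_const) hy'
  have hx0 : f x = 0 := by
    have h0 := hle 0 C.zero_mem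
    have h2 := hle _ (C.smul_mem (zero_le_two (α := ℝ)) hx)
    rw [map_zero] at h0
    rw [map_smul, smul_eq_mul] at h2
    linarith
  refine ⟨-f.toLinearMap, fun h ↦ ?_, fun y hy ↦ ?_, ?_⟩
  · obtain ⟨z, hz⟩ := hC
    have hz0 : f z = 0 := by simpa using LinearMap.congr_fun h z
    linarith [hf z hz]
  · simpa [hx0] using hle y hy
  · simpa using hx0

lemma mem_interior_iff_faceSpan_eq_top (hC : (interior (C : Set E)).Nonempty) :
    x ∈ interior (C : Set E) ↔ x ∈ C ∧ faceSpan C x = ⊤ := by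
  refine ⟨fun hx ↦ ⟨interior_subset hx, eq_top_iff.2 fun y _ ↦ mem_faceSpan.2 fun f hf h0 ↦ ?_⟩,
    fun ⟨hx, htop⟩ ↦ ?_⟩
  · by_contra hy
    exact (pos_of_mem_interior (fun h ↦ hy (by simp [h])) hf hx).ne' h0
  · by_contra hxi
    obtain ⟨f, hf0, hf, hfx⟩ := exists_dual_eq_zero_of_notMem_interior hC hx hxi
    refine hf0 (LinearMap.ext fun y ↦ ?_)
    exact mem_faceSpan.1 (htop ▸ Submodule.mem_top : y ∈ faceSpan C x) f hf hfx

end Interior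

section PrimitiveMatrix

variable {n : ℕ} {C : PointedCone ℝ (Fin n → ℝ)} {A : Matrix (Fin n) (Fin n) ℝ}
  {x y : Fin n → ℝ}

lemma IsProperCone.exists_pointedCone_coe_eq {K : Set (Fin n → ℝ)} (hK : IsProperCone K) :
    ∃ C : PointedCone ℝ (Fin n → ℝ), (C : Set (Fin n → ℝ)) = K := by
  obtain ⟨-, hadd, hsmul, -, x, hx⟩ := hK
  refine ⟨{ carrier := K, add_mem' := fun ha hb ↦ hadd _ ha _ hb, zero_mem' := ?_,
            smul_mem' := fun r y hy ↦ hsmul r r.2 y hy }, rfl⟩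
  simpa using hsmul 0 le_rfl x (interior_subset hx)

lemma IsProperCone.interior_nonempty {K : Set (Fin n → ℝ)} (hK : IsProperCone K) :
    (interior K).Nonempty :=
  hK.2.2.2.2

lemma IsProperCone.eq_zero_of_neg_mem {K : Set (Fin n → ℝ)} (hK : IsProperCone K) (hx : x ∈ K)
    (hx' : -x ∈ K) : x = 0 :=
  (Set.ext_iff.1 hK.2.2.2.1 x).1 ⟨hx, hx'⟩

lemma IsProperCone.zero_notMem_interior [NeZero n] {K : Set (Fin n → ℝ)} (hK : IsProperCone K) :
    0 ∉ interior K := fun h ↦ by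
  have h0 : K ∈ 𝓝 (0 : Fin n → ℝ) := mem_interior_iff_mem_nhds.1 h
  have hneg : -K ∈ 𝓝 (0 : Fin n → ℝ) := neg_mem_nhds_zero _ h0
  have hsing : interior ({0} : Set (Fin n → ℝ)) ∈ 𝓝 0 := by
    rw [interior_mem_nhds, ← hK.2.2.2.1]
    exact Filter.inter_mem h0 hneg
  rw [interior_singleton] at hsing
  exact Filter.empty_notMem _ hsing

lemma KNonneg.pow {K : Set (Fin n → ℝ)} (hA : KNonneg K A) (k : ℕ) : KNonneg K (A ^ k) := by
  induction k with
  | zero => intro x hx; simpa using hx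
  | succ k ih =>
    intro x hx
    rw [pow_succ', ← mulVec_mulVec]
    exact hA _ (ih x hx)

lemma KNonneg.mulVec_mem_faceSpan (hA : KNonneg (C : Set (Fin n → ℝ)) A) (h : y ∈ faceSpan C x) :
    A *ᵥ y ∈ faceSpan C (A *ᵥ x) :=
  map_mem_faceSpan (T := A.mulVecLin) hA h

lemma IsProperCone.mem_interior_of_mem_faceSpan (hC : IsProperCone (C : Set (Fin n → ℝ)))
    (hx : x ∈ C) (hy : y ∈ interior (C : Set (Fin n → ℝ))) (h : y ∈ faceSpan C x) :
    x ∈ interior (C : Set (Fin n → ℝ)) := by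
  rw [mem_interior_iff_faceSpan_eq_top hC.interior_nonempty] at hy ⊢
  exact ⟨hx, top_unique (hy.2.ge.trans (faceSpan_le_of_mem h))⟩

lemma IsProperCone.kPositive_of_generators (hC : IsProperCone (C : Set (Fin n → ℝ)))
    {S : Set (Fin n → ℝ)} (hS : PointedCone.hull ℝ S = C)
    (hA : KNonneg (C : Set (Fin n → ℝ)) A)
    (h : ∀ y ∈ S, A *ᵥ y ∈ interior (C : Set (Fin n → ℝ))) : KPositive (C : Set (Fin n → ℝ)) A := by
  intro x hx hx0
  obtain ⟨y, hyS, hy⟩ :=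
    exists_mem_faceSpan_of_mem_hull (hS ▸ PointedCone.subset_hull) (hS ▸ hx) hx0
  exact hC.mem_interior_of_mem_faceSpan (hA x hx) (h y hyS) (hA.mulVec_mem_faceSpan hy)

variable [NeZero n]

lemma KPrimitive.mulVec_mem_interior (hA : KPrimitive (C : Set (Fin n → ℝ)) A)
    (hC : IsProperCone (C : Set (Fin n → ℝ))) (hx : x ∈ interior (C : Set (Fin n → ℝ))) :
    A *ᵥ x ∈ interior (C : Set (Fin n → ℝ)) := by
  obtain ⟨hnonneg, k, hk, hpos⟩ := hA
  have hxC : x ∈ C := interior_subset hx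
  have hface : A ^ (k - 1) *ᵥ x ∈ faceSpan C x := by
    rw [((mem_interior_iff_faceSpan_eq_top hC.interior_nonempty).1 hx).2]
    exact Submodule.mem_top
  have hmem := hnonneg.mulVec_mem_faceSpan hface
  rw [mulVec_mulVec, ← pow_succ', Nat.sub_add_cancel hk] at hmem
  have hx0 : x ≠ 0 := fun h ↦ hC.zero_notMem_interior (h ▸ hx)
  exact hC.mem_interior_of_mem_faceSpan (hnonneg x hxC) (hpos x hxC hx0) hmem

lemma KPrimitive.pow_mulVec_mem_interior (hA : KPrimitive (C : Set (Fin n → ℝ)) A)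
    (hC : IsProperCone (C : Set (Fin n → ℝ))) (hx : x ∈ interior (C : Set (Fin n → ℝ))) (k : ℕ) :
    A ^ k *ᵥ x ∈ interior (C : Set (Fin n → ℝ)) := by
  induction k with
  | zero => simpa using hx
  | succ k ih =>
    rw [pow_succ', ← mulVec_mulVec]
    exact hA.mulVec_mem_interior hC ih

lemma KPrimitive.pow_mulVec_mem_interior_of_le (hA : KPrimitive (C : Set (Fin n → ℝ)) A)
    (hC : IsProperCone (C : Set (Fin n → ℝ))) {k l : ℕ} (hkl : k ≤ l)
    (hx : A ^ k *ᵥ x ∈ interior (C : Set (Fin n → ℝ))) :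
    A ^ l *ᵥ x ∈ interior (C : Set (Fin n → ℝ)) := by
  have h := hA.pow_mulVec_mem_interior hC hx (l - k)
  rwa [mulVec_mulVec, ← pow_add, Nat.sub_add_cancel hkl] at h

lemma KPrimitive.mulVec_ne_zero {K : Set (Fin n → ℝ)} (hA : KPrimitive K A) (hK : IsProperCone K)
    (hx : x ∈ K) (hx0 : x ≠ 0) : A *ᵥ x ≠ 0 := fun h ↦ by
  obtain ⟨-, k, hk, hpos⟩ := hA
  have hmem := hpos x hx hx0
  rw [← Nat.sub_add_cancel hk, pow_succ, ← mulVec_mulVec, h, mulVec_zero] at hmem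
  exact hK.zero_notMem_interior hmem

lemma KPrimitive.lt_expnt (hA : KPrimitive (C : Set (Fin n → ℝ)) A)
    (hC : IsProperCone (C : Set (Fin n → ℝ))) {k : ℕ}
    (hk : ¬ KPositive (C : Set (Fin n → ℝ)) (A ^ k)) : k < expnt (C : Set (Fin n → ℝ)) A := by
  by_contra! h
  obtain ⟨-, hpos⟩ : 0 < expnt (C : Set (Fin n → ℝ)) A ∧
      KPositive (C : Set (Fin n → ℝ)) (A ^ expnt (C : Set (Fin n → ℝ)) A) := Nat.sInf_mem hA.2
  exact hk fun x hx hx0 ↦ hA.pow_mulVec_mem_interior_of_le hC h (hpos x hx hx0)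

end PrimitiveMatrix

section ExtremeRay

lemma notMem_hull_generators_diff {E : Type*} [AddCommGroup E] [Module ℝ E] {C : PointedCone ℝ E}
    (hfg : C.FG) {x : E} (hx : x ∈ C.generators) :
    x ∉ PointedCone.hull ℝ (C.generators \ {x}) := fun h ↦ by
  have hspan := Submodule.span_insert_eq_span h
  rw [Set.insert_sdiff_singleton, Set.insert_eq_of_mem hx, C.span_generators] at hspan
  have hcard := Submodule.spanFinrank_span_le_ncard_of_finite (R := {c : ℝ // 0 ≤ c})
    (hfg.finite_generators.subset (Set.sdiff_subset (t := {x})))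
  rw [← hspan, ← hfg.generators_ncard] at hcard
  exact hcard.not_gt (Set.ncard_sdiff_singleton_lt_of_mem hx hfg.finite_generators)

lemma exists_eq_smul_add_of_mem_hull {E : Type*} [AddCommGroup E] [Module ℝ E] {S : Set E} {w : E}
    (hw : w ∈ PointedCone.hull ℝ S) (hw0 : w ≠ 0) :
    ∃ x ∈ S, ∃ a : ℝ, 0 < a ∧ ∃ z ∈ PointedCone.hull ℝ S, w = a • x + z := by
  induction hw using Submodule.span_induction with
  | mem x hx => exact ⟨x, hx, 1, one_pos, 0, zero_mem _, by simp⟩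
  | zero => exact absurd rfl hw0
  | add u v hu hv ihu ihv =>
    rcases eq_or_ne u 0 with rfl | hu0
    · simpa using ihv (by simpa using hw0)
    · obtain ⟨x, hx, a, ha, z, hz, rfl⟩ := ihu hu0
      exact ⟨x, hx, a, ha, z + v, add_mem hz hv, add_assoc _ _ _⟩
  | smul r u _ ih =>
    obtain ⟨x, hx, a, ha, z, hz, rfl⟩ := ih (right_ne_zero_of_smul hw0)
    have hr : 0 < r := pos_iff_ne_zero.2 (left_ne_zero_of_smul hw0)
    exact ⟨x, hx, r * a, mul_pos hr ha, r • z, Submodule.smul_mem _ r hz, by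
      rw [smul_add, mul_smul]; rfl⟩

variable {n : ℕ} {C : PointedCone ℝ (Fin n → ℝ)}

lemma isExtremeVec_of_mem_generators (hsal : ∀ x ∈ C, -x ∈ C → x = 0) (hfg : C.FG)
    {x : Fin n → ℝ} (hx : x ∈ C.generators) : IsExtremeVec (C : Set (Fin n → ℝ)) x := by
  have hirr := notMem_hull_generators_diff hfg hx
  have hle : PointedCone.hull ℝ (C.generators \ {x}) ≤ C :=
    (Submodule.span_mono Set.sdiff_subset).trans C.span_generators.le
  have hdecomp : ∀ w ∈ C, ∃ a : ℝ, 0 ≤ a ∧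
      ∃ w' ∈ PointedCone.hull ℝ (C.generators \ {x}), w = a • x + w' := fun w hw ↦ by
    rw [← C.span_generators, ← Set.insert_eq_of_mem hx, ← Set.insert_sdiff_singleton,
      Submodule.mem_span_insert] at hw
    obtain ⟨a, w', hw', rfl⟩ := hw
    exact ⟨a, a.2, w', hw', rfl⟩
  refine ⟨Submodule.FG.generators_mem C hx, fun h0 ↦ hirr (h0 ▸ zero_mem _), fun y hy z hz h ↦ ?_⟩
  obtain ⟨a, ha, y', hy', rfl⟩ := hdecomp y hy
  obtain ⟨b, hb, z', hz', rfl⟩ := hdecomp z hz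
  have hsum : y' + z' = (1 - (a + b)) • x := by
    rw [sub_smul, one_smul, add_smul, eq_sub_iff_add_eq]
    exact (h.trans (by abel)).symm
  have hab : 1 ≤ a + b := by
    by_contra! hlt
    have hpos : 0 < 1 - (a + b) := by linarith
    have hmem := PointedCone.smul_mem _ (inv_nonneg.2 hpos.le) (add_mem hy' hz')
    rw [hsum, inv_smul_smul₀ hpos.ne'] at hmem
    exact hirr hmem
  have hneg : -(y' + z') ∈ C := by
    rw [hsum, ← neg_smul]
    exact C.smul_mem (by linarith) (Submodule.FG.generators_mem C hx)
  have hy0 : y' = 0 := hsal y' (hle hy') <| by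
    simpa using add_mem hneg (hle hz')
  have hz0 : z' = 0 := hsal z' (hle hz') <| by
    simpa using add_mem hneg (hle hy')
  exact ⟨⟨a, ha, by simp [hy0]⟩, ⟨b, hb, by simp [hz0]⟩⟩

/-- The ray spanned by `x`, in the form in which `ExtremeRays` presents its members. -/
def rayOf (x : Fin n → ℝ) : Set (Fin n → ℝ) := {y | ∃ c : ℝ, 0 ≤ c ∧ y = c • x}

lemma rayOf_smul {a : ℝ} (ha : 0 < a) (x : Fin n → ℝ) : rayOf (a • x) = rayOf x := by
  ext y
  refine ⟨fun ⟨c, hc, hy⟩ ↦ ⟨c * a, by positivity, by rw [hy, smul_smul]⟩,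
    fun ⟨c, hc, hy⟩ ↦ ⟨c / a, by positivity, ?_⟩⟩
  rw [hy, smul_smul, div_mul_cancel₀ _ ha.ne']

lemma injOn_rayOf_generators (hfg : C.FG) : Set.InjOn rayOf C.generators := fun x hx y hy hxy ↦ by
  by_contra hne
  obtain ⟨c, hc, hxc⟩ : x ∈ rayOf y := hxy ▸ ⟨1, zero_le_one, (one_smul ℝ x).symm⟩
  have hyS : y ∈ C.generators \ {x} := ⟨hy, fun h ↦ hne h.symm⟩
  apply notMem_hull_generators_diff hfg hx
  have hmem := PointedCone.smul_mem (PointedCone.hull ℝ (C.generators \ {x})) hc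
    (PointedCone.subset_hull hyS)
  rwa [← hxc] at hmem

lemma extremeRays_eq_image_generators (hsal : ∀ x ∈ C, -x ∈ C → x = 0) (hfg : C.FG) :
    ExtremeRays (C : Set (Fin n → ℝ)) = rayOf '' C.generators := by
  ext R
  constructor
  · rintro ⟨v, ⟨hvC, hv0, hv⟩, rfl⟩
    have hv_mem := hvC
    rw [SetLike.mem_coe, ← C.span_generators] at hv_mem
    obtain ⟨x, hx, a, ha, z, hz, hvx⟩ := exists_eq_smul_add_of_mem_hull hv_mem hv0
    have hxC := Submodule.FG.generators_mem C hx
    obtain ⟨⟨b, hb, hab⟩, -⟩ := hv (a • x) (C.smul_mem ha.le hxC) z (C.span_generators.le hz) hvx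
    have hx0 : x ≠ 0 := (isExtremeVec_of_mem_generators hsal hfg hx).2.1
    have hb0 : b ≠ 0 := fun h ↦ smul_ne_zero ha.ne' hx0 (by rw [hab, h, zero_smul])
    refine ⟨x, hx, ?_⟩
    rw [← rayOf_smul ha, hab, rayOf_smul (lt_of_le_of_ne hb hb0.symm)]
    rfl
  · rintro ⟨x, hx, rfl⟩
    exact ⟨x, isExtremeVec_of_mem_generators hsal hfg hx, rfl⟩

lemma ncard_extremeRays (hsal : ∀ x ∈ C, -x ∈ C → x = 0) (hfg : C.FG) :
    (ExtremeRays (C : Set (Fin n → ℝ))).ncard = C.spanFinrank := by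
  rw [extremeRays_eq_image_generators hsal hfg, (injOn_rayOf_generators hfg).ncard_image,
    hfg.generators_ncard]

lemma coneGen_eq_hull_range {m : ℕ} (y : Fin m → Fin n → ℝ) :
    ConeGen y = PointedCone.hull ℝ (Set.range y) := by
  ext x
  rw [SetLike.mem_coe, Submodule.mem_span_range_iff_exists_fun]
  exact ⟨fun ⟨c, hc, hx⟩ ↦ ⟨fun j ↦ ⟨c j, hc j⟩, hx.symm⟩,
    fun ⟨c, hx⟩ ↦ ⟨fun j ↦ c j, fun j ↦ (c j).2, hx.symm⟩⟩

lemma IsPolyhedralCone.fg (hC : IsPolyhedralCone (C : Set (Fin n → ℝ))) : C.FG := by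
  obtain ⟨-, m, y, hy⟩ := hC
  rw [coneGen_eq_hull_range, SetLike.coe_set_eq] at hy
  exact hy ▸ Submodule.fg_span (Set.finite_range y)

end ExtremeRay

section Digraph

variable {α : Type*} {R : α → α → Prop}

/-- `HasWalk R k i j` says that the digraph `R` has a walk of length `k` from `i` to `j`. -/
def HasWalk (R : α → α → Prop) : ℕ → α → α → Prop
  | 0, i, j => i = j
  | k + 1, i, j => ∃ h, R i h ∧ HasWalk R k h j

lemma HasWalk.trans {k l : ℕ} {i j h : α} (hij : HasWalk R k i j) (hjh : HasWalk R l j h) :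
    HasWalk R (k + l) i h := by
  induction k generalizing i with
  | zero => exact (zero_add l).symm ▸ (show i = j from hij) ▸ hjh
  | succ k ih =>
    obtain ⟨i', hi', hwalk⟩ := hij
    rw [Nat.add_right_comm]
    exact ⟨i', hi', ih hwalk⟩

lemma HasWalk.of_rel {i j : α} (h : R i j) : HasWalk R 1 i j := ⟨j, h, rfl⟩

lemma hasWalk_iterate {σ : α → α} (hσ : ∀ i, R i (σ i)) {a b : ℕ} (hab : a ≤ b) (i : α) :
    HasWalk R (b - a) (σ^[a] i) (σ^[b] i) := by
  induction b, hab using Nat.le_induction with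
  | base => rw [Nat.sub_self]; rfl
  | succ b hab ih =>
    rw [Nat.sub_add_comm hab, Function.iterate_succ_apply']
    exact ih.trans (.of_rel (hσ _))

/-- `HasLasso R m i` says that the digraph `R` has a lasso with at most `m` edges based at `i`: a
walk of length `t` from `i` to a vertex on a circuit of length `l < m`, with `t + l ≤ m`. -/
def HasLasso (R : α → α → Prop) (m : ℕ) (i : α) : Prop :=
  ∃ t l j, 0 < l ∧ l < m ∧ t + l ≤ m ∧ HasWalk R t i j ∧ HasWalk R l j j

variable {σ : α → α} {m : ℕ} {i₀ : α}

lemma HasLasso.of_iterate_eq (hσ : ∀ i, R i (σ i)) {a b : ℕ} (hab : a < b) (hbm : b - a < m)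
    (hb : b ≤ m) (h : σ^[a] i₀ = σ^[b] i₀) : HasLasso R m i₀ := by
  have hcircuit := hasWalk_iterate hσ hab.le i₀
  rw [← h] at hcircuit
  exact ⟨a, b - a, _, by lia, hbm, by lia, hasWalk_iterate hσ a.zero_le i₀, hcircuit⟩

lemma HasLasso.of_chord (hσ : ∀ i, R i (σ i)) (hm : σ^[m] i₀ = i₀) {a b : ℕ} (ha : a < m)
    (hb : b < m) (h : R (σ^[a] i₀) (σ^[b] i₀)) (hne : σ^[b] i₀ ≠ σ^[a + 1] i₀) :
    HasLasso R m i₀ := by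
  have hba : b ≠ a + 1 := fun h ↦ hne (by rw [h])
  rcases le_or_gt b a with hle | hlt
  · have hb0 : ¬ (b = 0 ∧ a + 1 = m) := fun ⟨h0, h1⟩ ↦ hne (by rw [h1, hm, h0]; rfl)
    exact ⟨b, a - b + 1, _, by lia, by lia, by lia, hasWalk_iterate hσ b.zero_le i₀,
      (hasWalk_iterate hσ hle i₀).trans (.of_rel h)⟩
  · have hreturn := hasWalk_iterate hσ hb.le i₀
    rw [hm] at hreturn
    have hcircuit := ((hasWalk_iterate hσ a.zero_le i₀).trans (.of_rel h)).trans hreturn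
    exact ⟨0, _, i₀, by lia, by lia, by lia, rfl, hcircuit⟩

lemma hasLasso_or_forall_rel_iff [Fintype α] (hR : ∀ i, ∃ j, R i j) (i₀ : α) :
    HasLasso R (Fintype.card α) i₀ ∨
      ∃ σ : α → α, σ.Surjective ∧ ∀ i j, R i j ↔ j = σ i := by
  choose σ hσ using hR
  rw [or_iff_not_imp_left]
  intro hlasso
  have hinj : Set.InjOn (fun a ↦ σ^[a] i₀) (Finset.range (Fintype.card α)) := by
    intro a ha b hb h
    simp only [Finset.coe_range, Set.mem_Iio] at ha hb
    by_contra hne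
    rcases lt_or_gt_of_ne hne with hab | hab
    · exact hlasso (.of_iterate_eq hσ hab (by lia) hb.le h)
    · exact hlasso (.of_iterate_eq hσ hab (by lia) ha.le h.symm)
  have hsurj : ∀ j, ∃ a < Fintype.card α, σ^[a] i₀ = j := fun j ↦ by
    simpa using Finset.surjOn_of_injOn_of_card_le (t := Finset.univ) _ (by simp) hinj (by simp)
      (Finset.mem_coe.2 (Finset.mem_univ j))
  have hm : σ^[Fintype.card α] i₀ = i₀ := by
    obtain ⟨a, ha, h⟩ := hsurj (σ^[Fintype.card α] i₀)
    rcases a.eq_zero_or_pos with rfl | ha0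
    · exact h.symm
    · exact absurd (.of_iterate_eq hσ ha (by lia) le_rfl h) hlasso
  refine ⟨σ, fun j ↦ ?_, fun i j ↦ ⟨fun hij ↦ ?_, fun h ↦ h ▸ hσ i⟩⟩
  · obtain ⟨a, -, rfl⟩ := hsurj j
    refine ⟨σ^[a + (Fintype.card α - 1)] i₀, ?_⟩
    have hcard : 0 < Fintype.card α := Fintype.card_pos_iff.2 ⟨i₀⟩
    rw [← Function.iterate_succ_apply' σ, show (a + (Fintype.card α - 1)).succ =
      a + Fintype.card α by lia, Function.iterate_add_apply, hm]
  · obtain ⟨a, ha, rfl⟩ := hsurj i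
    obtain ⟨b, hb, rfl⟩ := hsurj j
    by_contra hne
    rw [← Function.iterate_succ_apply' σ] at hne
    exact hlasso (.of_chord hσ hm ha hb hij hne)

end Digraph

section UpperBound

variable {n : ℕ} {C : PointedCone ℝ (Fin n → ℝ)} {A : Matrix (Fin n) (Fin n) ℝ} {ι : Type*}
  {y : ι → Fin n → ℝ}

/-- The digraph on the index set of a family of vectors `y` in the cone `C` that has an edge from
`i` to `j` when `y j` lies in the face generated by `A y i`. -/
def FaceEdge (C : PointedCone ℝ (Fin n → ℝ)) (A : Matrix (Fin n) (Fin n) ℝ) (y : ι → Fin n → ℝ)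
    (i j : ι) : Prop :=
  y j ∈ faceSpan C (A *ᵥ y i)

lemma mem_faceSpan_of_hasWalk (hA : KNonneg (C : Set (Fin n → ℝ)) A) {k : ℕ} {i j : ι}
    (h : HasWalk (FaceEdge C A y) k i j) : y j ∈ faceSpan C (A ^ k *ᵥ y i) := by
  induction k generalizing i with
  | zero => simpa [show i = j from h] using self_mem_faceSpan
  | succ k ih =>
    obtain ⟨i', hi', hwalk⟩ := h
    rw [pow_succ, ← mulVec_mulVec]
    exact faceSpan_le_of_mem ((hA.pow k).mulVec_mem_faceSpan hi') (ih hwalk)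

lemma pow_mulVec_mem_of_forall_lt {W : Submodule ℝ (Fin n → ℝ)} {x : Fin n → ℝ}
    (h : ∀ k < n, A ^ k *ᵥ x ∈ W) (k : ℕ) : A ^ k *ᵥ x ∈ W := by
  rcases n.eq_zero_or_pos with rfl | hn
  · rw [Subsingleton.elim (A ^ k *ᵥ x) 0]
    exact W.zero_mem
  have hdeg : (Polynomial.X ^ k %ₘ A.charpoly).natDegree < n := by
    have hne : A.charpoly ≠ 1 := fun h1 ↦ by
      have hdim := A.charpoly_natDegree_eq_dim
      rw [h1, Polynomial.natDegree_one, Fintype.card_fin] at hdim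
      exact hn.ne hdim
    simpa using Polynomial.natDegree_modByMonic_lt (Polynomial.X ^ k) A.charpoly_monic hne
  rw [A.pow_eq_aeval_mod_charpoly, Polynomial.aeval_eq_sum_range' hdeg, sum_mulVec]
  refine W.sum_mem fun j hj ↦ ?_
  rw [smul_mulVec]
  exact W.smul_mem _ (h j (Finset.mem_range.1 hj))

lemma KPrimitive.mem_interior_of_forall_faceEdge_iff (hA : KPrimitive (C : Set (Fin n → ℝ)) A)
    (hC : IsProperCone (C : Set (Fin n → ℝ))) (hspan : PointedCone.hull ℝ (Set.range y) = C)
    (hy0 : ∀ i, y i ≠ 0) {σ : ι → ι} (hσ : σ.Surjective)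
    (h : ∀ i j, FaceEdge C A y i j ↔ j = σ i) (i : ι) :
    y i ∈ interior (C : Set (Fin n → ℝ)) := by
  have hsub : Set.range y ⊆ C := hspan ▸ PointedCone.subset_hull
  have hyC : ∀ i, y i ∈ C := fun i ↦ hsub ⟨i, rfl⟩
  have hstep : ∀ j, A *ᵥ y j ∈ faceSpan C (y (σ j)) := fun j ↦ by
    have hmem := mem_hull_inter_faceSpan hsub (hspan.ge (hA.1 _ (hyC j)))
    have hle : Set.range y ∩ faceSpan C (A *ᵥ y j) ⊆ {y (σ j)} := by
      rintro _ ⟨⟨j', rfl⟩, hj'⟩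
      rw [(h j j').1 hj']
      rfl
    have hray := PointedCone.hull_le_span ℝ _ (Submodule.span_mono hle hmem)
    exact Submodule.span_le.2 (Set.singleton_subset_iff.2 self_mem_faceSpan) hray
  have hiter : ∀ k j, A ^ k *ᵥ y j ∈ faceSpan C (y (σ^[k] j)) := fun k j ↦ by
    induction k with
    | zero => simpa using self_mem_faceSpan
    | succ k ih =>
      rw [pow_succ', ← mulVec_mulVec, Function.iterate_succ_apply']
      exact faceSpan_le_of_mem (hstep _) (hA.1.mulVec_mem_faceSpan ih)
  obtain ⟨k, -, hpos⟩ := hA.2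
  obtain ⟨j, rfl⟩ := hσ.iterate k i
  exact hC.mem_interior_of_mem_faceSpan (hyC _) (hpos _ (hyC j) (hy0 j)) (hiter k j)

lemma KPrimitive.pow_mulVec_mem_interior_of_circuit [NeZero n]
    (hA : KPrimitive (C : Set (Fin n → ℝ)) A) (hC : IsProperCone (C : Set (Fin n → ℝ)))
    {x : Fin n → ℝ} (hx : x ∈ C) (hx0 : x ≠ 0) {l : ℕ} (hl : 0 < l)
    (h : x ∈ faceSpan C (A ^ l *ᵥ x)) :
    A ^ ((n - 1) * l) *ᵥ x ∈ interior (C : Set (Fin n → ℝ)) := by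
  have hBnonneg := hA.1.pow l
  have hstep : ∀ k, (A ^ l) ^ k *ᵥ x ∈ faceSpan C ((A ^ l) ^ (k + 1) *ᵥ x) := fun k ↦ by
    rw [pow_succ, ← mulVec_mulVec]
    exact (hBnonneg.pow k).mulVec_mem_faceSpan h
  have hmono : Monotone fun k ↦ faceSpan C ((A ^ l) ^ k *ᵥ x) :=
    monotone_nat_of_le_succ fun k ↦ faceSpan_le_of_mem (hstep k)
  have hmem := pow_mulVec_mem_of_forall_lt (A := A ^ l) (x := x)
    (W := faceSpan C ((A ^ l) ^ (n - 1) *ᵥ x)) fun k hk ↦ hmono (by lia) self_mem_faceSpan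
  obtain ⟨k, -, hpos⟩ := hA.2
  have hint : (A ^ l) ^ k *ᵥ x ∈ interior (C : Set (Fin n → ℝ)) := by
    rw [← pow_mul]
    exact hA.pow_mulVec_mem_interior_of_le hC (Nat.le_mul_of_pos_left k hl) (hpos x hx hx0)
  rw [mul_comm, pow_mul]
  exact hC.mem_interior_of_mem_faceSpan ((hBnonneg.pow _) x hx) hint (hmem k)

lemma KPrimitive.pow_mulVec_mem_interior_of_hasLasso (hn : 2 ≤ n)
    (hA : KPrimitive (C : Set (Fin n → ℝ)) A) (hC : IsProperCone (C : Set (Fin n → ℝ)))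
    (hy : ∀ i, y i ∈ C) (hy0 : ∀ i, y i ≠ 0) {m : ℕ} {i : ι} (h : HasLasso (FaceEdge C A y) m i) :
    A ^ ((n - 1) * (m - 1) + 1) *ᵥ y i ∈ interior (C : Set (Fin n → ℝ)) := by
  have : NeZero n := ⟨by lia⟩
  obtain ⟨t, l, j, hl, hlm, htl, hij, hjj⟩ := h
  have hcircuit := hA.pow_mulVec_mem_interior_of_circuit hC (hy j) (hy0 j) hl
    (mem_faceSpan_of_hasWalk hA.1 hjj)
  have hpath := (hA.1.pow ((n - 1) * l)).mulVec_mem_faceSpan (mem_faceSpan_of_hasWalk hA.1 hij)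
  rw [mulVec_mulVec, ← pow_add] at hpath
  refine hA.pow_mulVec_mem_interior_of_le hC (k := (n - 1) * l + t) ?_
    (hC.mem_interior_of_mem_faceSpan (hA.1.pow _ _ (hy i)) hcircuit hpath)
  obtain ⟨n, rfl⟩ := Nat.exists_eq_add_of_le hn
  obtain ⟨m, rfl⟩ := Nat.exists_eq_add_of_lt hlm
  have hmul : (n + 1) * l = n * l + l := by ring
  have hmul' : (n + 1) * (l + m) = n * l + n * m + (l + m) := by ring
  rw [show 2 + n - 1 = n + 1 by lia, Nat.add_sub_cancel, hmul, hmul']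
  lia

theorem KPrimitive.expnt_le (hn : 2 ≤ n) (hA : KPrimitive (C : Set (Fin n → ℝ)) A)
    (hC : IsProperCone (C : Set (Fin n → ℝ))) (hfg : C.FG) :
    expnt (C : Set (Fin n → ℝ)) A ≤ (n - 1) * (C.spanFinrank - 1) + 1 := by
  have : NeZero n := ⟨by lia⟩
  let y : C.generators → Fin n → ℝ := (↑)
  have hrange : Set.range y = C.generators := Subtype.range_coe
  have hspan : PointedCone.hull ℝ (Set.range y) = C := by
    rw [hrange]
    exact C.span_generators
  have hyC : ∀ i, y i ∈ C := fun i ↦ Submodule.FG.generators_mem C i.2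
  have hy0 : ∀ i, y i ≠ 0 := fun i ↦
    (isExtremeVec_of_mem_generators (fun _ ↦ hC.eq_zero_of_neg_mem) hfg i.2).2.1
  have hedge : ∀ i, ∃ j, FaceEdge C A y i j := fun i ↦ by
    obtain ⟨_, ⟨j, rfl⟩, hj⟩ := exists_mem_faceSpan_of_mem_hull (hspan ▸ PointedCone.subset_hull)
      (hspan.ge (hA.1 _ (hyC i))) (hA.mulVec_ne_zero hC (hyC i) (hy0 i))
    exact ⟨j, hj⟩
  have : Fintype C.generators := hfg.finite_generators.fintype
  have hcard : Fintype.card C.generators = C.spanFinrank := by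
    rw [← hfg.generators_ncard, Set.ncard_eq_toFinset_card', Set.toFinset_card]
  refine Nat.sInf_le ⟨by lia, hC.kPositive_of_generators C.span_generators (hA.1.pow _) ?_⟩
  intro x hx
  rcases hasLasso_or_forall_rel_iff hedge ⟨x, hx⟩ with hlasso | ⟨σ, hσ, hiff⟩
  · exact hcard ▸ hA.pow_mulVec_mem_interior_of_hasLasso hn hC hyC hy0 hlasso
  · exact hA.pow_mulVec_mem_interior hC
      (hA.mem_interior_of_forall_faceEdge_iff hC hspan hy0 hσ hiff ⟨x, hx⟩) _

end UpperBound

section WielandtSequence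

/-- The recurrence `a (j + m) = c a (j + 1) + (1 - c) a j` satisfied by the orbits of Wielandt's
matrix, the weighted cycle of length `m` with one chord. -/
def WielandtRec {E : Type*} [AddCommGroup E] [Module ℝ E] (m : ℕ) (c : ℝ) (a : ℕ → E) : Prop :=
  ∀ j, a (j + m) = c • a (j + 1) + (1 - c) • a j

namespace WielandtRec

variable {m : ℕ} {c : ℝ}

section Module

variable {E : Type*} [AddCommGroup E] [Module ℝ E] {a : ℕ → E}

lemma forall_of_forall_lt (ha : WielandtRec m c a) (hm : 2 ≤ m) {P : E → Prop}
    (hP : ∀ s t, P s → P t → P (c • s + (1 - c) • t)) (h : ∀ j < m, P (a j)) (j : ℕ) :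
    P (a j) := by
  induction j using Nat.strong_induction_on with
  | _ j ih =>
    rcases lt_or_ge j m with hj | hj
    · exact h j hj
    · rw [← Nat.sub_add_cancel hj, ha]
      exact hP _ _ (ih _ (by lia)) (ih _ (by lia))

lemma eq_zero_of_window (ha : WielandtRec m c a) (hm : 2 ≤ m) (hc1 : c < 1) {i : ℕ}
    (h : ∀ j < m, a (i + j) = 0) (j : ℕ) : a j = 0 := by
  have hzero : ∀ s t : E, s = 0 → t = 0 → c • s + (1 - c) • t = 0 := by
    rintro _ _ rfl rfl
    simp
  refine ha.forall_of_forall_lt hm hzero ?_ j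
  induction i with
  | zero => simpa using h
  | succ i ih =>
    refine ih fun j hj ↦ ?_
    cases j with
    | succ j => simpa only [add_assoc, add_comm 1] using h j (by lia)
    | zero =>
      have hrec := ha i
      rw [show i + m = i + 1 + (m - 1) by lia, h _ (by lia), ← add_zero (i + 1), h 0 (by lia),
        smul_zero, zero_add, eq_comm, smul_eq_zero] at hrec
      exact hrec.resolve_left (sub_pos.2 hc1).ne'

lemma map {F : Type*} [AddCommGroup F] [Module ℝ F] (ha : WielandtRec m c a) (f : E →ₗ[ℝ] F) :
    WielandtRec m c fun j ↦ f (a j) := fun j ↦ by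
  simp only [ha j, map_add, map_smul]

end Module

lemma eq_zero_iff {a : ℕ → ℝ} (ha : WielandtRec m c a) (hm : 2 ≤ m) (hc0 : 0 < c) (hc1 : c < 1)
    (hnonneg : ∀ j, 0 ≤ a j) (k : ℕ) :
    ∀ r, k ≤ r → (a ((m - 1) * k + r) = 0 ↔ ∀ i ≤ k, a (r - i) = 0) := by
  induction k with
  | zero => simp
  | succ k ih =>
    rintro (_ | s) hr
    · lia
    obtain ⟨q, rfl⟩ : ∃ q, m = q + 1 := ⟨m - 1, by lia⟩
    have hindex : (q + 1 - 1) * (k + 1) + (s + 1) = (q + 1 - 1) * k + s + (q + 1) := by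
      rw [Nat.add_sub_cancel]
      ring
    have hc1' := sub_pos.2 hc1
    rw [hindex, ha, smul_eq_mul, smul_eq_mul, add_eq_zero_iff_of_nonneg
      (mul_nonneg hc0.le (hnonneg _)) (mul_nonneg hc1'.le (hnonneg _)),
      mul_eq_zero_iff_left hc0.ne', mul_eq_zero_iff_left hc1'.ne', add_assoc, ih (s + 1) (by lia),
      ih s (by lia)]
    constructor
    · rintro ⟨h₁, h₂⟩ i hi
      rcases hi.lt_or_eq with hi | rfl
      · exact h₁ i (by lia)
      · simpa using h₂ k le_rfl
    · refine fun h ↦ ⟨fun i hi ↦ h i (by lia), fun i hi ↦ ?_⟩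
      simpa using h (i + 1) (by lia)

end WielandtRec

end WielandtSequence

section FiniteHull

variable {E : Type*} [AddCommGroup E] [Module ℝ E] {e : Module.Dual ℝ E}

lemma mem_hull_iff_of_apply_eq_one {S : Set E} (he : ∀ y ∈ S, e y = 1) (hS : S.Nonempty) {z : E} :
    z ∈ PointedCone.hull ℝ S ↔ 0 ≤ e z ∧ ∃ s ∈ convexHull ℝ S, z = e z • s := by
  constructor
  · rw [PointedCone.mem_hull_set]
    rintro ⟨w, hwS, hw, rfl⟩
    have hw0 : ∀ y ∈ w.support, 0 ≤ w y := fun y _ ↦ hw y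
    have hsum : e (w.sum fun y r ↦ r • y) = ∑ y ∈ w.support, w y := by
      rw [Finsupp.sum, map_sum]
      refine Finset.sum_congr rfl fun y hy ↦ ?_
      rw [map_smul, he y (hwS hy), smul_eq_mul, mul_one]
    rw [hsum]
    refine ⟨Finset.sum_nonneg hw0, ?_⟩
    rcases (Finset.sum_nonneg hw0).eq_or_lt' with h | h
    · obtain ⟨s, hs⟩ := hS
      refine ⟨s, subset_convexHull ℝ S hs, ?_⟩
      rw [h, zero_smul, Finsupp.sum]
      refine Finset.sum_eq_zero fun y hy ↦ ?_
      rw [(Finset.sum_eq_zero_iff_of_nonneg hw0).1 h y hy, zero_smul]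
    · exact ⟨_, w.support.centerMass_mem_convexHull hw0 h hwS, (smul_inv_smul₀ h.ne' _).symm⟩
  · rintro ⟨hz, s, hs, hzs⟩
    rw [hzs]
    exact PointedCone.smul_mem _ hz
      (convexHull_min PointedCone.subset_hull (PointedCone.hull ℝ S).convex hs)

lemma eq_zero_of_neg_mem_hull {S : Set E} (he : ∀ y ∈ S, e y = 1) (hS : S.Nonempty) {z : E}
    (hz : z ∈ PointedCone.hull ℝ S) (hz' : -z ∈ PointedCone.hull ℝ S) : z = 0 := by
  rw [mem_hull_iff_of_apply_eq_one he hS] at hz hz'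
  obtain ⟨h, s, -, hzs⟩ := hz
  rw [map_neg, neg_nonneg] at hz'
  rw [hzs, le_antisymm hz'.1 h, zero_smul]

variable [TopologicalSpace E] [IsTopologicalAddGroup E] [ContinuousSMul ℝ E] [T2Space E]

lemma isClosed_hull_of_apply_eq_one {S : Set E} (hfin : S.Finite) (hec : Continuous e)
    (he : ∀ y ∈ S, e y = 1) (hS : S.Nonempty) : IsClosed (PointedCone.hull ℝ S : Set E) := by
  have hcompact : CompactSpace (convexHull ℝ S) :=
    isCompact_iff_compactSpace.1 (hfin.isCompact_convexHull (𝕜 := ℝ))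
  have hclosed : IsClosed {p : convexHull ℝ S × E | 0 ≤ e p.2 ∧ p.2 = e p.2 • (p.1 : E)} := by
    simp only [Set.ofPred_and]
    exact (isClosed_le (by fun_prop) (by fun_prop)).inter (isClosed_eq (by fun_prop) (by fun_prop))
  convert! isClosedMap_snd_of_compactSpace _ hclosed using 1
  ext z
  rw [SetLike.mem_coe, mem_hull_iff_of_apply_eq_one he hS]
  constructor
  · rintro ⟨h, s, hs, hzs⟩
    exact ⟨(⟨s, hs⟩, z), ⟨h, hzs⟩, rfl⟩
  · rintro ⟨⟨s, z⟩, ⟨h, hzs⟩, rfl⟩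
    exact ⟨h, s, s.2, hzs⟩

lemma interior_hull_range_nonempty [FiniteDimensional ℝ E] {ι : Type*} [Finite ι]
    {y : ι → E} (hy : Submodule.span ℝ (Set.range y) = ⊤) :
    (interior (PointedCone.hull ℝ (Set.range y) : Set E)).Nonempty := by
  have := Fintype.ofFinite ι
  have hsurj : Function.Surjective (Fintype.linearCombination ℝ y) := by
    rw [← LinearMap.range_eq_top, Fintype.range_linearCombination, hy]
  have hopen := LinearMap.isOpenMap_of_finiteDimensional _ hsurj _
    (isOpen_set_pi Set.finite_univ fun _ _ ↦ isOpen_Ioi (a := (0 : ℝ)))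
  refine Set.Nonempty.mono (interior_maximal ?_ hopen) ⟨_, 1, fun _ _ ↦ one_pos (α := ℝ), rfl⟩
  rintro _ ⟨d, hd, rfl⟩
  rw [Fintype.linearCombination_apply]
  exact Submodule.sum_mem _ fun i _ ↦ PointedCone.smul_mem _ (hd i trivial).le
    (PointedCone.subset_hull ⟨i, rfl⟩)

end FiniteHull

lemma isProperCone_hull {n : ℕ} {S : Set (Fin n → ℝ)} (hfin : S.Finite)
    (hspan : Submodule.span ℝ S = ⊤) (hS : S.Nonempty) {e : Module.Dual ℝ (Fin n → ℝ)}
    (he : ∀ y ∈ S, e y = 1) :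
    IsProperCone (PointedCone.hull ℝ S : Set (Fin n → ℝ)) := by
  have : Finite S := hfin
  have hec : Continuous e := LinearMap.continuous_of_finiteDimensional e
  refine ⟨isClosed_hull_of_apply_eq_one hfin hec he hS, fun _ hx _ ↦ add_mem hx,
    fun _ hc _ ↦ PointedCone.smul_mem _ hc, ?_, ?_⟩
  · refine Set.Subset.antisymm (fun z hz ↦ eq_zero_of_neg_mem_hull he hS hz.1 hz.2) ?_
    rintro z rfl
    simp
  · simpa using interior_hull_range_nonempty (y := ((↑) : S → Fin n → ℝ)) (by simpa using hspan)

section WielandtOrbit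

variable {n m : ℕ} {c : ℝ} {A : Matrix (Fin n) (Fin n) ℝ} {x : Fin n → ℝ}

/-- The orbit `x, A x, A² x, …` spans `ℝⁿ`, lies in an affine hyperplane off the origin, and
satisfies Wielandt's recurrence `A ^ m x = c A x + (1 - c) x` with `0 < c < 1`. -/
structure IsWielandtOrbit (m : ℕ) (c : ℝ) (A : Matrix (Fin n) (Fin n) ℝ) (x : Fin n → ℝ) :
    Prop where
  two_le : 2 ≤ m
  pos : 0 < c
  lt_one : c < 1
  pow_mulVec_eq : A ^ m *ᵥ x = c • A *ᵥ x + (1 - c) • x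
  span_eq_top : Submodule.span ℝ (Set.range fun j : ℕ ↦ A ^ j *ᵥ x) = ⊤
  exists_dual : ∃ e : Module.Dual ℝ (Fin n → ℝ), ∀ j : ℕ, e (A ^ j *ᵥ x) = 1

/-- The cone generated by the first `m` points of the orbit of `x` under `A`. -/
def orbitCone (A : Matrix (Fin n) (Fin n) ℝ) (x : Fin n → ℝ) (m : ℕ) :
    PointedCone ℝ (Fin n → ℝ) :=
  PointedCone.hull ℝ ((fun j ↦ A ^ j *ᵥ x) '' Set.Iio m)

namespace IsWielandtOrbit

lemma wielandtRec (h : IsWielandtOrbit m c A x) : WielandtRec m c fun j ↦ A ^ j *ᵥ x := fun j ↦ by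
  dsimp only
  rw [pow_add, ← mulVec_mulVec, h.pow_mulVec_eq, mulVec_add, mulVec_smul, mulVec_smul,
    mulVec_mulVec, ← pow_succ]

lemma pow_mulVec_mem_orbitCone (h : IsWielandtOrbit m c A x) (j : ℕ) :
    A ^ j *ᵥ x ∈ orbitCone A x m :=
  h.wielandtRec.forall_of_forall_lt h.two_le
    (fun _ _ hs ht ↦ add_mem (PointedCone.smul_mem _ h.pos.le hs)
      (PointedCone.smul_mem _ (sub_pos.2 h.lt_one).le ht))
    (fun _ hj ↦ PointedCone.subset_hull (Set.mem_image_of_mem _ (Set.mem_Iio.2 hj))) j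

lemma dual_eq_zero (h : IsWielandtOrbit m c A x) {g : Module.Dual ℝ (Fin n → ℝ)} {i : ℕ}
    (hg : ∀ j < m, g (A ^ (i + j) *ᵥ x) = 0) : g = 0 := by
  have hzero := (h.wielandtRec.map g).eq_zero_of_window h.two_le h.lt_one hg
  exact LinearMap.ext_on_range h.span_eq_top hzero

lemma isProperCone_orbitCone (h : IsWielandtOrbit m c A x) :
    IsProperCone (orbitCone A x m : Set (Fin n → ℝ)) := by
  obtain ⟨e, he⟩ := h.exists_dual
  have hx : x ∈ (fun j ↦ A ^ j *ᵥ x) '' Set.Iio m :=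
    ⟨0, zero_lt_two.trans_le h.two_le, by simp⟩
  refine isProperCone_hull ((Set.finite_Iio m).image _) ?_ ⟨x, hx⟩ (e := e) ?_
  · refine top_unique (h.span_eq_top.ge.trans (Submodule.span_le.2 ?_))
    rintro _ ⟨j, rfl⟩
    refine h.wielandtRec.forall_of_forall_lt h.two_le (fun _ _ hs ht ↦ add_mem
      (Submodule.smul_mem _ _ hs) (Submodule.smul_mem _ _ ht)) (fun j hj ↦ ?_) j
    exact Submodule.subset_span ⟨j, hj, rfl⟩
  · rintro _ ⟨j, -, rfl⟩
    exact he j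

lemma kNonneg_orbitCone (h : IsWielandtOrbit m c A x) :
    KNonneg (orbitCone A x m : Set (Fin n → ℝ)) A := by
  suffices orbitCone A x m ≤ (orbitCone A x m).comap A.mulVecLin from fun z hz ↦ this hz
  refine Submodule.span_le.2 ?_
  rintro _ ⟨j, -, rfl⟩
  change A *ᵥ (A ^ j *ᵥ x) ∈ orbitCone A x m
  rw [mulVec_mulVec, ← pow_succ']
  exact h.pow_mulVec_mem_orbitCone (j + 1)

lemma apply_pow_eq_zero_iff (h : IsWielandtOrbit m c A x) {f : Module.Dual ℝ (Fin n → ℝ)}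
    (hf : ∀ y ∈ orbitCone A x m, 0 ≤ f y) {k r : ℕ} (hkr : k ≤ r) :
    f (A ^ ((m - 1) * k + r) *ᵥ x) = 0 ↔ ∀ i ≤ k, f (A ^ (r - i) *ᵥ x) = 0 :=
  (h.wielandtRec.map f).eq_zero_iff h.two_le h.pos h.lt_one
    (fun j ↦ hf _ (h.pow_mulVec_mem_orbitCone j)) k r hkr

lemma kPrimitive_orbitCone (h : IsWielandtOrbit m c A x) :
    KPrimitive (orbitCone A x m : Set (Fin n → ℝ)) A := by
  have hC := h.isProperCone_orbitCone
  have hm := h.two_le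
  refine ⟨h.kNonneg_orbitCone, (m - 1) * (m - 1) + (m - 1), by lia,
    hC.kPositive_of_generators rfl (h.kNonneg_orbitCone.pow _) ?_⟩
  rintro _ ⟨i, -, rfl⟩
  dsimp only
  by_contra hint
  rw [mulVec_mulVec, ← pow_add, add_assoc] at hint
  obtain ⟨f, hf0, hf, hfx⟩ := exists_dual_eq_zero_of_notMem_interior hC.interior_nonempty
    (h.pow_mulVec_mem_orbitCone _) hint
  rw [h.apply_pow_eq_zero_iff hf (by lia)] at hfx
  refine hf0 (h.dual_eq_zero (i := i) fun j hj ↦ ?_)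
  simpa [show m - 1 + i - (m - 1 - j) = i + j by lia] using hfx (m - 1 - j) (by lia)

lemma lt_expnt_orbitCone [NeZero n] (h : IsWielandtOrbit m c A x) {f : Module.Dual ℝ (Fin n → ℝ)}
    (hf0 : f ≠ 0) (hf : ∀ j < m, 0 ≤ f (A ^ j *ᵥ x)) {k r : ℕ} (hkr : k ≤ r)
    (hzero : ∀ i ≤ k, f (A ^ (r - i) *ᵥ x) = 0) :
    (m - 1) * k + r < expnt (orbitCone A x m : Set (Fin n → ℝ)) A := by
  refine h.kPrimitive_orbitCone.lt_expnt h.isProperCone_orbitCone fun hpos ↦ ?_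
  have hfC : ∀ y ∈ orbitCone A x m, 0 ≤ f y := fun y hy ↦ by
    induction hy using Submodule.span_induction with
    | mem y hy => obtain ⟨j, hj, rfl⟩ := hy; exact hf j hj
    | zero => simp
    | add y z _ _ hy hz => rw [map_add]; exact add_nonneg hy hz
    | smul a y _ hy => exact (map_smul f (a : ℝ) y).ge.trans' (mul_nonneg a.2 hy)
  obtain ⟨e, he⟩ := h.exists_dual
  have hx0 : x ≠ 0 := by
    rintro rfl
    simpa using he 0
  have hx : x ∈ orbitCone A x m := by simpa using h.pow_mulVec_mem_orbitCone 0
  exact (pos_of_mem_interior hf0 hfC (hpos x hx hx0)).ne'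
    ((h.apply_pow_eq_zero_iff hfC hkr).2 hzero)

lemma isPolyhedralCone_orbitCone (h : IsWielandtOrbit m c A x) :
    IsPolyhedralCone (orbitCone A x m : Set (Fin n → ℝ)) := by
  refine ⟨h.isProperCone_orbitCone, m, fun j ↦ A ^ (j : ℕ) *ᵥ x, ?_⟩
  rw [coneGen_eq_hull_range, orbitCone]
  congr
  ext y
  simp [Fin.exists_iff]

lemma memP_orbitCone (h : IsWielandtOrbit m c A x) (hn : 2 ≤ n)
    (hlarge : (n - 1) * (m - 2) + 1 < expnt (orbitCone A x m : Set (Fin n → ℝ)) A) :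
    MemP m (orbitCone A x m : Set (Fin n → ℝ)) := by
  have hC := h.isProperCone_orbitCone
  have hfin : ((fun j ↦ A ^ j *ᵥ x) '' Set.Iio m).Finite := (Set.finite_Iio m).image _
  have hfg : (orbitCone A x m).FG := Submodule.fg_span hfin
  have hle : (orbitCone A x m).spanFinrank ≤ m := by
    refine (Submodule.spanFinrank_span_le_ncard_of_finite hfin).trans ?_
    simpa using Set.ncard_image_le (Set.finite_Iio m) (f := fun j ↦ A ^ j *ᵥ x)
  have hupper := h.kPrimitive_orbitCone.expnt_le hn hC hfg
  refine ⟨h.isPolyhedralCone_orbitCone, ?_⟩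
  rw [ncard_extremeRays (fun _ ↦ hC.eq_zero_of_neg_mem) hfg]
  by_contra hne
  have hmul := Nat.mul_le_mul_left (n - 1) (show (orbitCone A x m).spanFinrank - 1 ≤ m - 2 by lia)
  lia

end IsWielandtOrbit

end WielandtOrbit

section CyclicVector

open Polynomial

lemma exists_aeval_mulVec_eq_mk {R : Type*} [CommRing R] {n : ℕ} {p : R[X]} (hp : p.Monic)
    (hd : p.natDegree = n) :
    ∃ (A : Matrix (Fin n) (Fin n) R) (x : Fin n → R) (φ : AdjoinRoot p ≃ₗ[R] (Fin n → R)),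
      ∀ q : R[X], aeval A q *ᵥ x = φ (AdjoinRoot.mk p q) := by
  subst hd
  let b := AdjoinRoot.powerBasisAux' hp
  refine ⟨Algebra.leftMulMatrix b (AdjoinRoot.root p), b.repr 1, b.equivFun, fun q ↦ ?_⟩
  rw [aeval_algHom_apply, AdjoinRoot.aeval_eq, Algebra.leftMulMatrix_mulVec_repr, mul_one]
  rfl

lemma exists_dual_mk_eq_coeff_divByMonic_sub {R : Type*} [CommRing R] {p : R[X]} (hp : p.Monic)
    {u : PowerSeries R} (hu : (p : PowerSeries R) * u = 1) (T : ℕ) :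
    ∃ f : Module.Dual R (AdjoinRoot p), ∀ q : R[X],
      f (AdjoinRoot.mk p q) = (q /ₘ p).coeff T - PowerSeries.coeff T ((q : PowerSeries R) * u) := by
  refine ⟨-(PowerSeries.coeff T ∘ₗ LinearMap.mulRight R u ∘ₗ
    (coeToPowerSeries.algHom R).toLinearMap ∘ₗ AdjoinRoot.modByMonicHom hp), fun q ↦ ?_⟩
  have hmod : (↑(q %ₘ p) : PowerSeries R) * u = q * u - ↑(q /ₘ p) := by
    rw [modByMonic_eq_sub_mul_div, coe_sub, coe_mul, sub_mul, mul_right_comm, hu, one_mul]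
  simp [hmod]

lemma coeff_X_pow_divByMonic_eq_zero {R : Type*} [CommRing R] {p : R[X]} (hp : p.Monic)
    {j T : ℕ} (hj : j < T + p.natDegree) : (X ^ j /ₘ p).coeff T = 0 := by
  nontriviality R
  rcases lt_or_ge j p.natDegree with hjp | hjp
  · rw [(divByMonic_eq_zero_iff hp).2, coeff_zero]
    rwa [degree_X_pow, degree_eq_natDegree hp.ne_zero, Nat.cast_lt]
  · refine coeff_eq_zero_of_natDegree_lt ?_
    rw [natDegree_divByMonic _ hp, natDegree_X_pow]
    lia

lemma coeff_X_pow_add_natDegree_divByMonic {R : Type*} [CommRing R] {p : R[X]} (hp : p.Monic)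
    (T : ℕ) : (X ^ (T + p.natDegree) /ₘ p).coeff T = 1 := by
  nontriviality R
  have hlead : (X ^ (T + p.natDegree) /ₘ p).leadingCoeff = 1 := by
    rw [leadingCoeff_divByMonic_of_monic hp, (monic_X_pow _).leadingCoeff]
    rw [degree_X_pow, degree_eq_natDegree hp.ne_zero, Nat.cast_le]
    lia
  rwa [leadingCoeff, natDegree_divByMonic _ hp, natDegree_X_pow, Nat.add_sub_cancel] at hlead

variable {m n T : ℕ} {c : ℝ} {p : ℝ[X]} {u : PowerSeries ℝ}

/-- The characteristic polynomial of Wielandt's matrix. -/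
def wielandtPoly (m : ℕ) (c : ℝ) : ℝ[X] := X ^ m - C c * X - C (1 - c)

lemma isWielandtOrbit_of_aeval_mulVec_eq_mk (hm : 2 ≤ m) (hc0 : 0 < c) (hc1 : c < 1)
    (hdvd : p ∣ wielandtPoly m c) (hroot : p.IsRoot 1)
    {A : Matrix (Fin n) (Fin n) ℝ} {x : Fin n → ℝ} {φ : AdjoinRoot p ≃ₗ[ℝ] (Fin n → ℝ)}
    (hφ : ∀ q : ℝ[X], aeval A q *ᵥ x = φ (AdjoinRoot.mk p q)) : IsWielandtOrbit m c A x := by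
  refine ⟨hm, hc0, hc1, ?_, ?_, ?_⟩
  · have hzero := hφ (wielandtPoly m c)
    rw [AdjoinRoot.mk_eq_zero.2 hdvd, map_zero] at hzero
    rw [sub_smul, one_smul]
    simpa [wielandtPoly, sub_mulVec, Algebra.algebraMap_eq_smul_one, smul_mulVec, sub_sub,
      sub_eq_zero, add_mulVec] using hzero
  · refine Submodule.eq_top_iff'.2 fun z ↦ ?_
    obtain ⟨q, hq⟩ := AdjoinRoot.mk_surjective (φ.symm z)
    rw [← φ.apply_symm_apply z, ← hq, ← hφ, aeval_eq_sum_range, sum_mulVec]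
    refine Submodule.sum_mem _ fun j _ ↦ ?_
    rw [smul_mulVec]
    exact Submodule.smul_mem _ _ (Submodule.subset_span ⟨j, rfl⟩)
  · refine ⟨(AdjoinRoot.liftAlgHom p (Algebra.ofId ℝ ℝ) 1 hroot).toLinearMap ∘ₗ φ.symm, fun j ↦ ?_⟩
    have hj := hφ (X ^ j)
    rw [map_pow, aeval_X] at hj
    simp [hj]

lemma exists_dual_of_aeval_mulVec_eq_mk (hp : p.Monic) (hd : p.natDegree = n)
    (hu : (p : PowerSeries ℝ) * u = 1) (hneg : ∀ j ≤ T, PowerSeries.coeff j u ≤ 0)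
    {A : Matrix (Fin n) (Fin n) ℝ} {x : Fin n → ℝ} {φ : AdjoinRoot p ≃ₗ[ℝ] (Fin n → ℝ)}
    (hφ : ∀ q : ℝ[X], aeval A q *ᵥ x = φ (AdjoinRoot.mk p q)) :
    ∃ f : Module.Dual ℝ (Fin n → ℝ), f ≠ 0 ∧ (∀ j ≤ T + n, 0 ≤ f (A ^ j *ᵥ x)) ∧
      ∀ j, T < j → j < T + n → f (A ^ j *ᵥ x) = 0 := by
  obtain ⟨f, hf⟩ := exists_dual_mk_eq_coeff_divByMonic_sub hp hu T
  have hval : ∀ j, (f ∘ₗ φ.symm.toLinearMap) (A ^ j *ᵥ x) =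
      (X ^ j /ₘ p).coeff T - if j ≤ T then PowerSeries.coeff (T - j) u else 0 := fun j ↦ by
    have hj := hφ (X ^ j)
    rw [map_pow, aeval_X] at hj
    rw [hj, LinearMap.comp_apply, LinearEquiv.coe_coe, LinearEquiv.symm_apply_apply, hf, coe_pow,
      coe_X, PowerSeries.coeff_X_pow_mul']
  have hlow : ∀ j < T + n, (X ^ j /ₘ p).coeff T = 0 := fun j hj ↦
    coeff_X_pow_divByMonic_eq_zero hp (hd ▸ hj)
  have htop : (X ^ (T + n) /ₘ p).coeff T = 1 := hd ▸ coeff_X_pow_add_natDegree_divByMonic hp T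
  have hneg' : ∀ j, (if j ≤ T then PowerSeries.coeff (T - j) u else 0) ≤ 0 := fun j ↦ by
    split_ifs
    exacts [hneg _ (Nat.sub_le T j), le_rfl]
  have hpos : 0 < (f ∘ₗ φ.symm.toLinearMap) (A ^ (T + n) *ᵥ x) := by
    rw [hval, htop]
    linarith [hneg' (T + n)]
  refine ⟨f ∘ₗ φ.symm.toLinearMap, fun h ↦ hpos.ne' (by rw [h, LinearMap.zero_apply]),
    fun j hj ↦ ?_, fun j hTj hj ↦ ?_⟩
  · rcases hj.lt_or_eq with hj | rfl
    · rw [hval, hlow j hj, zero_sub, neg_nonneg]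
      exact hneg' j
    · exact hpos.le
  · rw [hval, hlow j hj, if_neg hTj.not_ge, sub_zero]

lemma exists_expnt_ge_of_dvd_wielandtPoly (hn : 3 ≤ n) (hT : T + n ≤ m)
    (hTm : m ≤ T + n + 1) (hc0 : 0 < c) (hc1 : c < 1) (hp : p.Monic) (hd : p.natDegree = n)
    (hdvd : p ∣ wielandtPoly m c) (hroot : p.IsRoot 1) (hu : (p : PowerSeries ℝ) * u = 1)
    (hneg : ∀ j ≤ T, PowerSeries.coeff j u ≤ 0) :
    ∃ (K : Set (Fin n → ℝ)) (A : Matrix (Fin n) (Fin n) ℝ), MemP m K ∧ KPrimitive K A ∧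
      (n - 2) * (m - 1) + T + n ≤ expnt K A := by
  have : NeZero n := ⟨by lia⟩
  obtain ⟨A, x, φ, hφ⟩ := exists_aeval_mulVec_eq_mk hp hd
  have horbit := isWielandtOrbit_of_aeval_mulVec_eq_mk (by lia) hc0 hc1 hdvd hroot hφ
  obtain ⟨f, hf0, hnonneg, hzero⟩ := exists_dual_of_aeval_mulVec_eq_mk hp hd hu hneg hφ
  have hlt := horbit.lt_expnt_orbitCone hf0 (fun j _ ↦ hnonneg j (by lia)) (k := n - 2)
    (r := T + n - 1) (by lia) (fun i hi ↦ hzero _ (by lia) (by lia))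
  refine ⟨_, A, horbit.memP_orbitCone (by lia) (hlt.trans_le' ?_), horbit.kPrimitive_orbitCone, ?_⟩
  · have hmul : (n - 1) * (m - 2) = (m - 2) * (n - 2) + (m - 2) := by
      rw [show n - 1 = n - 2 + 1 by lia]
      ring
    have hmul' : (m - 1) * (n - 2) = (m - 2) * (n - 2) + (n - 2) := by
      rw [show m - 1 = m - 2 + 1 by lia]
      ring
    lia
  · rw [mul_comm (n - 2)]
    lia

end CyclicVector

section SineProducts

/-- The product of the `N` consecutive sines `sin ((t + 1) α), …, sin ((t + N) α)`. -/
def sinProd (α : ℝ) (N : ℕ) (t : ℤ) : ℝ := ∏ i ∈ Finset.range N, sin ((t + 1 + i) * α)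

lemma sinProd_succ (α : ℝ) (N : ℕ) (t : ℤ) :
    sinProd α (N + 1) t = sinProd α N t * sin ((t + 1 + N) * α) :=
  Finset.prod_range_succ _ _

lemma sinProd_succ_sub_one (α : ℝ) (N : ℕ) (t : ℤ) :
    sinProd α (N + 1) (t - 1) = sinProd α N t * sin (t * α) := by
  rw [sinProd, Finset.prod_range_succ', sinProd]
  congr 1
  · refine Finset.prod_congr rfl fun i _ ↦ ?_
    push_cast
    ring_nf
  · simp

lemma sinProd_add_one_mul_sin (α : ℝ) (N : ℕ) (t : ℤ) :
    sinProd α N (t + 1) * sin ((t + 1) * α) = sinProd α N t * sin ((t + 1 + N) * α) := by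
  have h := sinProd_succ_sub_one α N (t + 1)
  rw [add_sub_cancel_right, sinProd_succ] at h
  exact_mod_cast h.symm

lemma sinProd_succ_neg_one (α : ℝ) (N : ℕ) : sinProd α (N + 1) (-1) = 0 := by
  simpa using sinProd_succ_sub_one α N 0

lemma sinProd_add_two_neg_two (α : ℝ) (N : ℕ) : sinProd α (N + 2) (-2) = 0 := by
  simpa [sinProd_succ_neg_one] using sinProd_succ_sub_one α (N + 1) (-1)

lemma sin_mul_sin_sub_two_cos_mul (a b α : ℝ) :
    sin (a + b - α) * sin (a + b) - 2 * cos b * (sin a * sin (a + b - α)) +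
      sin (a - α) * sin a = sin (b - α) * sin b := by
  have ha := sin_sq_add_cos_sq a
  have hb := sin_sq_add_cos_sq b
  simp only [sin_add, sin_sub, cos_add]
  grind

lemma sinProd_add_two_recurrence (α : ℝ) (N : ℕ) (t : ℤ) :
    sinProd α (N + 2) t - 2 * cos ((N + 2) * α) * sinProd α (N + 2) (t - 1) +
      sinProd α (N + 2) (t - 2) =
    sinProd α N t * (sin ((N + 1) * α) * sin ((N + 2) * α)) := by
  have h₀ : sinProd α (N + 2) t =
      sinProd α N t * (sin ((t + 1 + N) * α) * sin ((t + 2 + N) * α)) := by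
    rw [sinProd_succ, sinProd_succ, mul_assoc]
    push_cast
    ring_nf
  have h₁ : sinProd α (N + 2) (t - 1) =
      sinProd α N t * (sin (t * α) * sin ((t + 1 + N) * α)) := by
    rw [sinProd_succ_sub_one, sinProd_succ]
    ring
  have h₂ : sinProd α (N + 2) (t - 2) = sinProd α N t * (sin ((t - 1) * α) * sin (t * α)) := by
    rw [show t - 2 = t - 1 - 1 by ring, sinProd_succ_sub_one, sinProd_succ_sub_one]
    push_cast
    ring
  have htrig := sin_mul_sin_sub_two_cos_mul (t * α) ((N + 2) * α) α
  rw [show t * α + (N + 2) * α - α = (t + 1 + N) * α by ring,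
    show t * α + (N + 2) * α = (t + 2 + N) * α by ring, show t * α - α = (t - 1) * α by ring,
    show (N + 2) * α - α = (N + 1) * α by ring] at htrig
  rw [h₀, h₁, h₂, ← htrig]
  ring

lemma sinProd_add_two_zero (α : ℝ) (N : ℕ) :
    sinProd α (N + 2) 0 = sinProd α N 0 * (sin ((N + 1) * α) * sin ((N + 2) * α)) := by
  have h := sinProd_add_two_recurrence α N 0
  rwa [zero_sub, zero_sub, sinProd_succ_neg_one, sinProd_add_two_neg_two, mul_zero, sub_zero,
    add_zero] at h

/-- The Gaussian binomial coefficient `[t + 2 K, 2 K]` at `q = exp (2 i α)`, divided by the power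
of `q` that makes it real. -/
def sinBinom (α : ℝ) (K : ℕ) (t : ℤ) : ℝ := sinProd α (2 * K) t / sinProd α (2 * K) 0

lemma sinBinom_zero_left (α : ℝ) (t : ℤ) : sinBinom α 0 t = 1 := by simp [sinBinom, sinProd]

lemma sinBinom_succ_neg_one (α : ℝ) (K : ℕ) : sinBinom α (K + 1) (-1) = 0 := by
  rw [sinBinom, mul_add, sinProd_succ_neg_one, zero_div]

lemma sinBinom_succ_neg_two (α : ℝ) (K : ℕ) : sinBinom α (K + 1) (-2) = 0 := by
  rw [sinBinom, mul_add, sinProd_add_two_neg_two, zero_div]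

lemma sinBinom_succ_recurrence {α : ℝ} {K : ℕ} (h : sinProd α (2 * (K + 1)) 0 ≠ 0) (t : ℤ) :
    sinBinom α (K + 1) t - 2 * cos (2 * (K + 1) * α) * sinBinom α (K + 1) (t - 1) +
      sinBinom α (K + 1) (t - 2) = sinBinom α K t := by
  have hstep := sinProd_add_two_recurrence α (2 * K) t
  have hzero := sinProd_add_two_zero α (2 * K)
  rw [mul_add_one, hzero] at h
  push_cast at hstep
  rw [sinBinom, sinBinom, sinBinom, sinBinom, mul_add_one 2 K, ← mul_div_assoc, ← sub_div,
    ← add_div, show 2 * ((K : ℝ) + 1) = 2 * K + 2 by ring, hstep, hzero]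
  push_cast at h ⊢
  exact mul_div_mul_right _ _ (right_ne_zero_of_mul h)

lemma mk_mul_one_sub_C_mul_X_add_X_sq {R : Type*} [CommRing R] {w w' : ℤ → R} {b : R}
    (h₁ : w (-1) = 0) (h₂ : w (-2) = 0)
    (h : ∀ j, w j - b * w (j - 1) + w (j - 2) = w' j) :
    PowerSeries.mk (fun j : ℕ ↦ w j) *
        (1 - PowerSeries.C b * PowerSeries.X + PowerSeries.X ^ 2) =
      PowerSeries.mk fun j : ℕ ↦ w' j := by
  ext j
  rw [show PowerSeries.mk (fun j : ℕ ↦ w j) *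
      (1 - PowerSeries.C b * PowerSeries.X + PowerSeries.X ^ 2) =
      .mk (fun j : ℕ ↦ w j) - .C b * (.mk (fun j : ℕ ↦ w j) * .X) +
        .mk (fun j : ℕ ↦ w j) * .X * .X by ring]
  simp only [map_add, map_sub, PowerSeries.coeff_C_mul, PowerSeries.coeff_mk, ← h]
  rcases j with _ | _ | j
  · simp [h₁, h₂]
  · simp [PowerSeries.coeff_succ_mul_X, h₁]
  · simp only [PowerSeries.coeff_succ_mul_X, PowerSeries.coeff_mk]
    push_cast
    ring_nf

lemma mk_sinBinom_mul_prod {α : ℝ} {K : ℕ} (h : ∀ L ≤ K, sinProd α (2 * L) 0 ≠ 0) :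
    PowerSeries.mk (fun j : ℕ ↦ sinBinom α K j) * ((1 - PowerSeries.X) * ∏ k : Fin K,
      (1 - PowerSeries.C (2 * cos (2 * (k + 1) * α)) * PowerSeries.X + PowerSeries.X ^ 2)) = 1 := by
  induction K with
  | zero => simpa [sinBinom_zero_left, ← Pi.one_def] using PowerSeries.mk_one_mul_one_sub_eq_one ℝ
  | succ K ih =>
    rw [Fin.prod_univ_castSucc, ← mul_assoc (1 - PowerSeries.X), mul_comm _ (_ + _), ← mul_assoc]
    simp only [Fin.val_castSucc, Fin.val_last]
    rw [mk_mul_one_sub_C_mul_X_add_X_sq (sinBinom_succ_neg_one α K) (sinBinom_succ_neg_two α K)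
      (sinBinom_succ_recurrence (h _ le_rfl))]
    exact ih fun L hL ↦ h L (by lia)

variable {M N K j : ℕ}

lemma sin_natCast_mul_pi_div_pos_s17 {a : ℕ} (ha : 0 < a) (haM : a < M) :
    0 < sin (a * (π / M)) := by
  have hM : (0 : ℝ) < M := mod_cast ha.trans haM
  refine sin_pos_of_pos_of_lt_pi (by positivity) ?_
  rw [mul_div_assoc', div_lt_iff₀ hM, mul_comm]
  exact mul_lt_mul_of_pos_left (mod_cast haM) pi_pos

lemma sinProd_pos (h : j + N < M) : 0 < sinProd (π / M) N j := by
  refine Finset.prod_pos fun i hi ↦ ?_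
  have hsin := sin_natCast_mul_pi_div_pos_s17 (M := M) (a := j + 1 + i) (by lia)
    (by linarith [Finset.mem_range.1 hi])
  exact_mod_cast hsin

lemma sinBinom_pos (h : j + 2 * K < M) : 0 < sinBinom (π / M) K j :=
  div_pos (sinProd_pos h) (mod_cast sinProd_pos (j := 0) (by lia))

lemma sinProd_eq_of_add_eq {j' : ℕ} (h : j + j' + N + 1 = M) :
    sinProd (π / M) N j = sinProd (π / M) N j' := by
  rw [sinProd, ← Finset.prod_range_reflect]
  refine Finset.prod_congr rfl fun i hi ↦ ?_
  have hi : i + 1 ≤ N := Finset.mem_range.1 hi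
  have hM : (M : ℝ) ≠ 0 := by
    rw [← h]
    positivity
  rw [← sin_pi_sub, Nat.sub_sub, add_comm 1 i, Nat.cast_sub hi]
  congr 1
  push_cast
  field_simp
  rw [← h]
  push_cast
  ring

lemma sin_lt_sin_of_add_lt {a b : ℕ} (hab : a < b) (hM : a + b < M) :
    sin (a * (π / M)) < sin (b * (π / M)) := by
  have hM0 : (0 : ℝ) < M := mod_cast (Nat.zero_le _).trans_lt hM
  have hM' : ((a : ℝ) + b) * (π / M) < π := by
    rw [mul_div_assoc', div_lt_iff₀ hM0, mul_comm]
    exact mul_lt_mul_of_pos_left (mod_cast hM) pi_pos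
  have hlt : a * (π / M) < b * (π / M) := by gcongr
  have ha : 0 ≤ a * (π / M) := by positivity
  rw [add_mul] at hM'
  rw [← sub_pos, sin_sub_sin]
  have hsin : 0 < sin ((b * (π / M) - a * (π / M)) / 2) :=
    sin_pos_of_pos_of_lt_pi (by linarith) (by linarith)
  have hcos : 0 < cos ((b * (π / M) + a * (π / M)) / 2) :=
    cos_pos_of_mem_Ioo ⟨by linarith, by linarith⟩
  positivity

lemma sinProd_lt_add_one (hN : 1 ≤ N) (h : 2 * j + N + 2 < M) :
    sinProd (π / M) N j < sinProd (π / M) N (j + 1) := by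
  have hsin : 0 < sin ((j + 1 : ℕ) * (π / M)) :=
    sin_natCast_mul_pi_div_pos_s17 j.succ_pos (by lia)
  have hlt : sin ((j + 1 : ℕ) * (π / M)) < sin ((j + 1 + N : ℕ) * (π / M)) :=
    sin_lt_sin_of_add_lt (by lia) (by lia)
  have hratio := sinProd_add_one_mul_sin (π / M) N j
  push_cast at hsin hlt hratio
  refine lt_of_mul_lt_mul_right ?_ hsin.le
  rw [hratio]
  exact mul_lt_mul_of_pos_left hlt (sinProd_pos (by lia))

/-- The alternating partial sums `w j - w (j - 1) + w (j - 2) - ⋯ ± w 0`. -/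
def altSum {R : Type*} [Ring R] (w : ℕ → R) : ℕ → R
  | 0 => w 0
  | j + 1 => w (j + 1) - altSum w j

lemma mk_altSum_mul_one_add_X {R : Type*} [Ring R] (w : ℕ → R) :
    PowerSeries.mk (altSum w) * (1 + PowerSeries.X) = PowerSeries.mk w := by
  ext j
  rw [mul_add, mul_one, map_add]
  cases j <;> simp [altSum, PowerSeries.coeff_succ_mul_X]

lemma altSum_add_eq_altSum_sub {R : Type*} [Ring R] {w : ℕ → R} {d : ℕ}
    (hsymm : ∀ i ≤ d, w (d + 1 + i) = w (d - i)) :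
    ∀ i ≤ d, altSum w (d + i) = altSum w (d - i)
  | 0, _ => rfl
  | i + 1, hi => by
    have ih := altSum_add_eq_altSum_sub hsymm i (by lia)
    have hw := hsymm i (by lia)
    rw [show d - i = d - (i + 1) + 1 by lia] at ih hw
    rw [← add_assoc, altSum, ih, add_right_comm, hw, altSum, sub_sub_cancel]

section altSum

variable {R : Type*} [Ring R] [LinearOrder R] [IsStrictOrderedRing R] {w : ℕ → R} {d : ℕ}

lemma altSum_pos_and_le (h0 : 0 < w 0) (hlt : ∀ j < d, w j < w (j + 1)) :
    ∀ j ≤ d, 0 < altSum w j ∧ altSum w j ≤ w j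
  | 0, _ => ⟨h0, le_rfl⟩
  | j + 1, hj =>
    have ⟨hpos, hle⟩ := altSum_pos_and_le h0 hlt j (by lia)
    ⟨sub_pos.2 (hle.trans_lt (hlt j (by lia))), sub_le_self _ hpos.le⟩

lemma altSum_pos_of_unimodal_of_symm (h0 : 0 < w 0) (hlt : ∀ j < d, w j < w (j + 1))
    (hsymm : ∀ i ≤ d, w (d + 1 + i) = w (d - i)) {j : ℕ} (hj : j ≤ 2 * d) : 0 < altSum w j := by
  rcases le_total j d with hjd | hdj
  · exact (altSum_pos_and_le h0 hlt j hjd).1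
  · obtain ⟨i, rfl⟩ := Nat.exists_eq_add_of_le hdj
    rw [altSum_add_eq_altSum_sub hsymm i (by lia)]
    exact (altSum_pos_and_le h0 hlt _ (d.sub_le i)).1

end altSum

lemma altSum_sinBinom_pos {d : ℕ} (hK : 1 ≤ K) (hM : M = 2 * d + 2 * K + 2) (hj : j ≤ 2 * d) :
    0 < altSum (fun j : ℕ ↦ sinBinom (π / M) K j) j := by
  refine altSum_pos_of_unimodal_of_symm (sinBinom_pos (by lia)) (fun j hj ↦ ?_) (fun i hi ↦ ?_) hj
  · have h0 : 0 < sinProd (π / M) (2 * K) 0 := mod_cast sinProd_pos (j := 0) (by lia)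
    exact div_lt_div_of_pos_right (mod_cast sinProd_lt_add_one (by lia) (by lia)) h0
  · rw [sinBinom, sinProd_eq_of_add_eq (j' := d - i) (by lia), sinBinom]

end SineProducts

section Perturbation

open Polynomial Filter
open scoped PowerSeries.WithPiTopology

lemma exists_forall_norm_sub_le_of_aeval_eq_zero {𝕜 L : Type*} [Field 𝕜] [NormedField L]
    [Algebra 𝕜 L] [IsAlgClosed L] {f : 𝕜[X]} (hf : f.natDegree ≠ 0) (a : L) :
    ∃ z : L, aeval z f = 0 ∧ ∀ w : L, aeval w f = 0 → ‖a - z‖ ≤ ‖a - w‖ := by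
  have hne : f ≠ 0 := fun h ↦ hf (by rw [h, natDegree_zero])
  obtain ⟨z₀, hz₀⟩ := IsAlgClosed.exists_aeval_eq_zero L f
    fun h ↦ hf (natDegree_eq_zero_iff_degree_le_zero.2 h.le)
  obtain ⟨z, hz, hmin⟩ := Set.exists_min_image _ (fun z ↦ ‖a - z‖) (f.rootSet_finite L)
    ⟨z₀, mem_rootSet.2 ⟨hne, hz₀⟩⟩
  exact ⟨z, (mem_rootSet.1 hz).2, fun w hw ↦ hmin w (mem_rootSet.2 ⟨hne, hw⟩)⟩

lemma exists_tendsto_aeval_eq_zero {𝕜 L ι : Type*} [NormedField 𝕜] [NormedField L]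
    [NormedAlgebra 𝕜 L] [IsAlgClosed L] {l : Filter ι} {f : ι → 𝕜[X]} {f₀ : 𝕜[X]}
    (hf : ∀ s, (f s).Monic) (hf₀ : f₀.Monic) (hdeg : ∀ s, (f s).natDegree = f₀.natDegree)
    (hlim : ∀ i, Tendsto (fun s ↦ (f s).coeff i) l (𝓝 (f₀.coeff i))) {a : L}
    (ha : aeval a f₀ = 0) :
    ∃ r : ι → L, (∀ s, aeval (r s) (f s) = 0) ∧ Tendsto r l (𝓝 a) := by
  have hdeg₀ : f₀.natDegree ≠ 0 := fun h ↦ by simp [hf₀.natDegree_eq_zero.1 h] at ha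
  choose r hr hmin using fun s ↦
    exists_forall_norm_sub_le_of_aeval_eq_zero (f := f s) ((hdeg s).trans_ne hdeg₀) a
  refine ⟨r, hr, Metric.tendsto_nhds.2 fun ε hε ↦ ?_⟩
  have hbound : Continuous fun δ : ℝ ↦
      ((f₀.natDegree + 1) * δ) ^ (f₀.natDegree : ℝ)⁻¹ * max ‖a‖ 1 :=
    ((continuous_const.mul continuous_id).rpow_const fun _ ↦ .inr (by positivity)).mul
      continuous_const
  have hsmall := (hbound.tendsto' 0 0 (by simp [hdeg₀])).mono_left (nhdsWithin_le_nhds (s := Ioi 0))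
  obtain ⟨δ, hδε, hδ⟩ := ((hsmall.eventually (gt_mem_nhds hε)).and self_mem_nhdsWithin).exists
  have hcoeff : ∀ᶠ s in l, ∀ i ∈ Finset.range (f₀.natDegree + 1),
      ‖(f s).coeff i - f₀.coeff i‖ < δ :=
    (eventually_all_finset _).2 fun i _ ↦ by
      simpa only [dist_eq_norm] using Metric.tendsto_nhds.1 (hlim i) δ hδ
  filter_upwards [hcoeff] with s hs
  have hcoeff' : ∀ i, ‖(f s).coeff i - f₀.coeff i‖ < δ := fun i ↦ by
    rcases lt_or_ge f₀.natDegree i with hi | hi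
    · rwa [coeff_eq_zero_of_natDegree_lt (hdeg s ▸ hi), coeff_eq_zero_of_natDegree_lt hi, sub_zero,
        norm_zero]
    · exact hs i (Finset.mem_range_succ_iff.2 hi)
  obtain ⟨w, hw, hwδ⟩ := exists_aroots_norm_sub_lt_of_norm_coeff_sub_lt hδ ha hf₀ (hf s) (hdeg s)
    hcoeff' (IsAlgClosed.splits _)
  rw [dist_comm, dist_eq_norm]
  exact (hmin s w (mem_aroots.1 hw).2).trans_lt (hwδ.trans hδε)

lemma wielandtPoly_eq (m : ℕ) (c : ℝ) : wielandtPoly m c = X ^ m - (C c * X + C (1 - c)) :=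
  sub_sub _ _ _

lemma monic_wielandtPoly {m : ℕ} (hm : 2 ≤ m) (c : ℝ) : (wielandtPoly m c).Monic := by
  rw [wielandtPoly_eq]
  exact monic_X_pow_sub (degree_linear_le.trans_lt (mod_cast hm))

lemma natDegree_wielandtPoly {m : ℕ} (hm : 2 ≤ m) (c : ℝ) : (wielandtPoly m c).natDegree = m := by
  rw [wielandtPoly_eq, natDegree_sub_eq_left_of_natDegree_lt, natDegree_X_pow]
  rw [natDegree_X_pow]
  exact natDegree_linear_le.trans_lt hm

lemma continuous_coeff_wielandtPoly (m i : ℕ) :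
    Continuous fun c : ℝ ↦ (wielandtPoly m c).coeff i := by
  simp only [wielandtPoly, coeff_sub, coeff_C_mul, coeff_C]
  split_ifs <;> fun_prop

/-- The real quadratic polynomial with roots `z` and its conjugate. -/
def conjQuadratic (z : ℂ) : ℝ[X] := X ^ 2 - C (2 * z.re) * X + C (‖z‖ ^ 2)

lemma conjQuadratic_eq (z : ℂ) :
    conjQuadratic z = C 1 * X ^ 2 + C (-(2 * z.re)) * X + C (‖z‖ ^ 2) := by
  simp [conjQuadratic, sub_eq_add_neg]

lemma natDegree_conjQuadratic (z : ℂ) : (conjQuadratic z).natDegree = 2 := by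
  rw [conjQuadratic_eq, natDegree_quadratic one_ne_zero]

lemma monic_conjQuadratic (z : ℂ) : (conjQuadratic z).Monic := by
  rw [conjQuadratic_eq, Monic, leadingCoeff_quadratic one_ne_zero]

lemma aeval_conjQuadratic_self (z : ℂ) : aeval z (conjQuadratic z) = 0 := by
  have hadd := Complex.add_conj z
  have hmul := Complex.mul_conj' z
  simp only [conjQuadratic, map_add, map_sub, map_mul, map_pow, aeval_X, aeval_C,
    Complex.coe_algebraMap]
  push_cast at hadd ⊢
  rw [← hadd, ← hmul]
  ring

lemma irreducible_conjQuadratic {z : ℂ} (hz : z.im ≠ 0) : Irreducible (conjQuadratic z) := by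
  refine irreducible_of_degree_le_three_of_not_isRoot (by simp [natDegree_conjQuadratic])
    fun x hx ↦ ?_
  simp only [conjQuadratic, IsRoot, eval_add, eval_sub, eval_mul, eval_pow, eval_X, eval_C] at hx
  rw [← Complex.normSq_eq_norm_sq, Complex.normSq_apply] at hx
  nlinarith [sq_nonneg (x - z.re), mul_self_pos.2 hz]

lemma re_eq_of_conjQuadratic_eq {z w : ℂ} (h : conjQuadratic z = conjQuadratic w) :
    z.re = w.re := by
  have hcoeff := congrArg (coeff · 1) h
  simpa [conjQuadratic, coeff_X_pow, coeff_C, -map_pow] using hcoeff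

lemma isCoprime_conjQuadratic {z w : ℂ} (hz : z.im ≠ 0) (h : z.re ≠ w.re) :
    IsCoprime (conjQuadratic z) (conjQuadratic w) := by
  rw [(irreducible_conjQuadratic hz).coprime_iff_not_dvd]
  refine fun hdvd ↦ h (re_eq_of_conjQuadratic_eq (Eq.symm ?_))
  exact eq_of_monic_of_dvd_of_natDegree_le (monic_conjQuadratic z) (monic_conjQuadratic w) hdvd
    (by rw [natDegree_conjQuadratic, natDegree_conjQuadratic])

lemma mul_prod_conjQuadratic_dvd {κ : Type*} [Fintype κ] {q b : ℝ[X]} {z : κ → ℂ}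
    (hz : ∀ k, aeval (z k) q = 0) (him : ∀ k, (z k).im ≠ 0)
    (hre : Function.Injective fun k ↦ (z k).re) (hb : b ∣ q)
    (hbreal : ∀ w : ℂ, aeval w b = 0 → w.im = 0) : b * ∏ k, conjQuadratic (z k) ∣ q := by
  refine IsCoprime.mul_dvd (IsCoprime.prod_right fun k _ ↦ ?_) hb
    (Finset.prod_dvd_of_coprime
      (fun i _ j _ hij ↦ isCoprime_conjQuadratic (him i) (hre.ne hij))
      fun k _ ↦ quadratic_dvd_of_aeval_eq_zero_im_ne_zero q (hz k) (him k))
  rw [isCoprime_comm, (irreducible_conjQuadratic (him k)).coprime_iff_not_dvd]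
  rintro ⟨r, rfl⟩
  exact him k (hbreal _ (by rw [map_mul, aeval_conjQuadratic_self, zero_mul]))

lemma continuous_coe_conjQuadratic :
    Continuous fun z : ℂ ↦ (conjQuadratic z : PowerSeries ℝ) := by
  refine continuous_iff_continuousAt.2 fun z ↦
    (PowerSeries.WithPiTopology.tendsto_iff_coeff_tendsto ..).2 fun d ↦ Continuous.tendsto ?_ z
  simp only [Polynomial.coeff_coe, conjQuadratic, coeff_add, coeff_sub, coeff_C_mul, coeff_C]
  split_ifs <;> fun_prop

lemma tendsto_coeff_inv {𝕜 ι : Type*} [Field 𝕜] [TopologicalSpace 𝕜] [IsTopologicalRing 𝕜]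
    [ContinuousInv₀ 𝕜] {l : Filter ι} {F : ι → PowerSeries 𝕜} {F₀ : PowerSeries 𝕜}
    (hF : Tendsto F l (𝓝 F₀)) (h₀ : PowerSeries.constantCoeff F₀ ≠ 0) (j : ℕ) :
    Tendsto (fun s ↦ PowerSeries.coeff j (F s)⁻¹) l (𝓝 (PowerSeries.coeff j F₀⁻¹)) := by
  rw [PowerSeries.WithPiTopology.tendsto_iff_coeff_tendsto] at hF
  have hconst : Tendsto (fun s ↦ (PowerSeries.constantCoeff (F s))⁻¹) l
      (𝓝 (PowerSeries.constantCoeff F₀)⁻¹) := by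
    simpa only [PowerSeries.coeff_zero_eq_constantCoeff_apply] using
      (hF 0).inv₀ (by rwa [PowerSeries.coeff_zero_eq_constantCoeff_apply])
  induction j using Nat.strong_induction_on with
  | _ j ih =>
    simp only [PowerSeries.coeff_inv j]
    split_ifs with hj
    · exact hconst
    · refine hconst.neg.mul (tendsto_finsetSum _ fun x _ ↦ ?_)
      split_ifs with hx
      · exact (hF _).mul (ih _ hx)
      · exact tendsto_const_nhds

lemma exists_tendsto_forall_mul_prod_conjQuadratic_dvd {ι κ : Type*} [Fintype κ] {l : Filter ι}
    {f : ι → ℝ[X]} {f₀ : ℝ[X]} (hf : ∀ s, (f s).Monic) (hf₀ : f₀.Monic)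
    (hdeg : ∀ s, (f s).natDegree = f₀.natDegree)
    (hlim : ∀ i, Tendsto (fun s ↦ (f s).coeff i) l (𝓝 (f₀.coeff i))) {ω : κ → ℂ}
    (hω : ∀ k, aeval (ω k) f₀ = 0) (him : ∀ k, (ω k).im ≠ 0)
    (hre : Function.Injective fun k ↦ (ω k).re) :
    ∃ r : ι → κ → ℂ, (∀ k, Tendsto (r · k) l (𝓝 (ω k))) ∧
      ∀ᶠ s in l, ∀ b : ℝ[X], b ∣ f s → (∀ w : ℂ, aeval w b = 0 → w.im = 0) →
        b * ∏ k, conjQuadratic (r s k) ∣ f s := by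
  choose r hr hrω using fun k ↦ exists_tendsto_aeval_eq_zero hf hf₀ hdeg hlim (hω k)
  have him' : ∀ᶠ s in l, ∀ k, (r k s).im ≠ 0 := eventually_all.2 fun k ↦
    ((Complex.continuous_im.tendsto _).comp (hrω k)).eventually_ne (him k)
  have hre' : ∀ᶠ s in l, ∀ i j, i ≠ j → (r i s).re ≠ (r j s).re :=
    eventually_all.2 fun i ↦ eventually_all.2 fun j ↦ eventually_imp_distrib_left.2 fun hij ↦ by
      have hlim := (Complex.continuous_re.tendsto _).comp ((hrω i).sub (hrω j))
      filter_upwards [hlim.eventually_ne (b₂ := 0) (by simpa [sub_eq_zero] using hre.ne hij)]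
        with s hs
      simpa [sub_eq_zero] using hs
  refine ⟨fun s k ↦ r k s, hrω, ?_⟩
  filter_upwards [him', hre'] with s hs_im hs_re b hb hbreal
  exact mul_prod_conjQuadratic_dvd (fun k ↦ hr k s) hs_im
    (fun i j hij ↦ not_imp_comm.1 (hs_re i j) (not_not.2 hij)) hb hbreal

variable {ι : Type*} {l : Filter ι} {m n T : ℕ} {c : ι → ℝ}

lemma exists_expnt_ge_of_tendsto [l.NeBot] (hn : 3 ≤ n) (hT : T + n ≤ m)
    (hTm : m ≤ T + n + 1) (hc : ∀ᶠ s in l, c s ∈ Ioo 0 1) {p : ι → ℝ[X]} {P w : PowerSeries ℝ}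
    (hp : ∀ s, (p s).Monic) (hd : ∀ s, (p s).natDegree = n) (hroot : ∀ s, (p s).IsRoot 1)
    (hdvd : ∀ᶠ s in l, p s ∣ wielandtPoly m (c s))
    (hlim : Tendsto (fun s ↦ (p s : PowerSeries ℝ)) l (𝓝 P)) (hw : w * P = 1)
    (hneg : ∀ j ≤ T, PowerSeries.coeff j w < 0) :
    ∃ (K : Set (Fin n → ℝ)) (A : Matrix (Fin n) (Fin n) ℝ), MemP m K ∧ KPrimitive K A ∧
      (n - 2) * (m - 1) + T + n ≤ expnt K A := by
  have hP : PowerSeries.constantCoeff P ≠ 0 :=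
    ((IsUnit.of_mul_eq_one_right w hw).map PowerSeries.constantCoeff).ne_zero
  have hPinv : P⁻¹ = w := ((PowerSeries.eq_inv_iff_mul_eq_one hP).2 hw).symm
  have hneg' : ∀ᶠ s in l, ∀ j ∈ Finset.range (T + 1),
      PowerSeries.coeff j (p s : PowerSeries ℝ)⁻¹ < 0 :=
    (eventually_all_finset _).2 fun j hj ↦ (tendsto_coeff_inv hlim hP j).eventually_lt_const
      (hPinv ▸ hneg j (Finset.mem_range_succ_iff.1 hj))
  have hconst : ∀ᶠ s in l, PowerSeries.constantCoeff (p s : PowerSeries ℝ) ≠ 0 := by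
    simp only [← PowerSeries.coeff_zero_eq_constantCoeff_apply] at hP ⊢
    exact ((PowerSeries.WithPiTopology.tendsto_iff_coeff_tendsto ..).1 hlim 0).eventually_ne hP
  obtain ⟨s, hcs, hdvds, hnegs, hconsts⟩ := (hc.and (hdvd.and (hneg'.and hconst))).exists
  exact exists_expnt_ge_of_dvd_wielandtPoly hn hT hTm hcs.1 hcs.2 (hp s) (hd s) hdvds (hroot s)
    (PowerSeries.mul_inv_cancel _ hconsts)
    fun j hj ↦ (hnegs j (Finset.mem_range_succ_iff.2 hj)).le

end Perturbation

section RootsOfUnity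

open Polynomial Filter
open scoped PowerSeries.WithPiTopology

/-- The `k`-th of the nontrivial `M`-th roots of unity, in order of increasing argument. -/
def unityRoot (M k : ℕ) : ℂ := Complex.exp ((2 * (k + 1) * (π / M) : ℝ) * Complex.I)

lemma unityRoot_re (M k : ℕ) : (unityRoot M k).re = cos (2 * (k + 1) * (π / M)) :=
  Complex.exp_ofReal_mul_I_re _

lemma unityRoot_im (M k : ℕ) : (unityRoot M k).im = sin (2 * (k + 1) * (π / M)) :=
  Complex.exp_ofReal_mul_I_im _

lemma norm_unityRoot (M k : ℕ) : ‖unityRoot M k‖ = 1 := Complex.norm_exp_ofReal_mul_I _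

variable {M K : ℕ}

lemma unityRoot_pow (hM : M ≠ 0) (k : ℕ) : unityRoot M k ^ M = 1 := by
  rw [unityRoot, ← Complex.exp_nat_mul, Complex.exp_eq_one_iff]
  refine ⟨k + 1, ?_⟩
  push_cast
  field_simp

lemma unityRoot_im_pos (hK : 2 * K < M) (k : Fin K) : 0 < (unityRoot M k).im := by
  have hsin := sin_natCast_mul_pi_div_pos_s17 (M := M) (a := 2 * (k + 1)) (by lia) (by lia)
  rw [unityRoot_im]
  exact_mod_cast hsin

lemma injective_unityRoot_re (hK : 2 * K < M) :
    Function.Injective fun k : Fin K ↦ (unityRoot M k).re := by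
  have hM : (0 : ℝ) < M := mod_cast (Nat.zero_le _).trans_lt hK
  have hmem (k : Fin K) : 2 * ((k : ℝ) + 1) * (π / M) ∈ Icc 0 π := by
    refine ⟨by positivity, ?_⟩
    rw [mul_div_assoc', div_le_iff₀ hM, mul_comm]
    exact mul_le_mul_of_nonneg_left (mod_cast (by lia : 2 * ((k : ℕ) + 1) ≤ M)) pi_pos.le
  intro i j hij
  simp only [unityRoot_re] at hij
  have hangle := injOn_cos (hmem i) (hmem j) hij
  rw [mul_left_inj' (by positivity), mul_right_inj' two_ne_zero, add_left_inj] at hangle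
  exact Fin.ext (mod_cast hangle)

lemma coe_conjQuadratic_unityRoot (M k : ℕ) : (conjQuadratic (unityRoot M k) : PowerSeries ℝ) =
    1 - PowerSeries.C (2 * cos (2 * (k + 1) * (π / M))) * PowerSeries.X + PowerSeries.X ^ 2 := by
  rw [conjQuadratic, norm_unityRoot, unityRoot_re, one_pow, map_one]
  push_cast
  ring

lemma mk_sinBinom_mul_prod_conjQuadratic (hK : 2 * K < M) :
    PowerSeries.mk (fun j : ℕ ↦ sinBinom (π / M) K j) * ((1 - PowerSeries.X) *
      ∏ k : Fin K, (conjQuadratic (unityRoot M k) : PowerSeries ℝ)) = 1 := by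
  simp only [coe_conjQuadratic_unityRoot]
  exact mk_sinBinom_mul_prod fun L hL ↦ (mod_cast (sinProd_pos (j := 0) (by lia)).ne')

lemma coe_prod_conjQuadratic {κ : Type*} [Fintype κ] (z : κ → ℂ) :
    ((∏ k, conjQuadratic (z k) : ℝ[X]) : PowerSeries ℝ) =
      ∏ k, (conjQuadratic (z k) : PowerSeries ℝ) :=
  map_prod coeToPowerSeries.ringHom ..

lemma exists_expnt_ge_of_cofactor {ι : Type*} {l : Filter ι} [l.NeBot] {m n T : ℕ}
    (hn : 3 ≤ n) (hT : T + n ≤ m) (hTm : m ≤ T + n + 1) (hK : 2 * K < M) {c : ι → ℝ} {c₀ : ℝ}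
    (hc : ∀ᶠ s in l, c s ∈ Ioo 0 1) (hc₀ : Tendsto c l (𝓝 c₀))
    (hunity : ∀ z : ℂ, z ^ M = 1 → aeval z (wielandtPoly m c₀) = 0) {g : ι → ℝ[X]}
    (hg : ∀ s, (g s).Monic) (hd : ∀ s, (g s).natDegree + 2 * K + 1 = n)
    (hreal : ∀ s, ∀ z : ℂ, aeval z (g s) = 0 → z.im = 0)
    (hdvd : ∀ᶠ s in l, (X - C 1) * g s ∣ wielandtPoly m (c s)) {G : PowerSeries ℝ}
    (hG : Tendsto (fun s ↦ (g s : PowerSeries ℝ)) l (𝓝 G)) {w : ℕ → ℝ}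
    (hw : PowerSeries.mk w * G = PowerSeries.mk fun j : ℕ ↦ sinBinom (π / M) K j)
    (hpos : ∀ j ≤ T, 0 < w j) :
    ∃ (K : Set (Fin n → ℝ)) (A : Matrix (Fin n) (Fin n) ℝ), MemP m K ∧ KPrimitive K A ∧
      (n - 2) * (m - 1) + T + n ≤ expnt K A := by
  have hm : 2 ≤ m := by lia
  obtain ⟨r, hr, hrdvd⟩ := exists_tendsto_forall_mul_prod_conjQuadratic_dvd
    (fun s ↦ monic_wielandtPoly hm (c s)) (monic_wielandtPoly hm c₀)
    (fun s ↦ by rw [natDegree_wielandtPoly hm, natDegree_wielandtPoly hm])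
    (fun i ↦ ((continuous_coeff_wielandtPoly m i).tendsto c₀).comp hc₀)
    (fun k : Fin K ↦ hunity _ (unityRoot_pow (Nat.ne_zero_of_lt hK) k))
    (fun k ↦ (unityRoot_im_pos hK k).ne') (injective_unityRoot_re hK)
  have hmonic (s : ι) : ((X - C 1) * g s).Monic := (monic_X_sub_C 1).mul (hg s)
  have hprod (s : ι) : (∏ k, conjQuadratic (r s k)).Monic :=
    monic_prod_of_monic _ _ fun k _ ↦ monic_conjQuadratic _
  refine exists_expnt_ge_of_tendsto (p := fun s ↦ (X - C 1) * g s * ∏ k, conjQuadratic (r s k))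
    (P := (PowerSeries.X - 1) * G * ∏ k : Fin K, (conjQuadratic (unityRoot M k) : PowerSeries ℝ))
    (w := -PowerSeries.mk w) hn hT hTm hc (fun s ↦ (hmonic s).mul (hprod s)) (fun s ↦ ?_)
    (fun s ↦ by simp) ?_ ?_ ?_ (fun j hj ↦ ?_)
  · rw [(hmonic s).natDegree_mul (hprod s), (monic_X_sub_C 1).natDegree_mul (hg s),
      natDegree_X_sub_C, natDegree_prod_of_monic _ _ fun k _ ↦ monic_conjQuadratic _]
    simp only [natDegree_conjQuadratic, Finset.sum_const, Finset.card_fin, smul_eq_mul]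
    linarith [hd s]
  · filter_upwards [hdvd, hrdvd] with s hs hrs
    refine hrs _ hs fun z hz ↦ ?_
    rw [map_mul, mul_eq_zero, map_sub, aeval_X, aeval_C, map_one, sub_eq_zero] at hz
    rcases hz with rfl | hz
    exacts [Complex.one_im, hreal s z hz]
  · simp only [coe_mul, coe_sub, coe_X, map_one, coe_one, coe_prod_conjQuadratic]
    exact (tendsto_const_nhds.mul hG).mul <| tendsto_finsetProd _ fun k _ ↦
      (continuous_coe_conjQuadratic.tendsto _).comp (hr k)
  · linear_combination mk_sinBinom_mul_prod_conjQuadratic hK +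
      (1 - PowerSeries.X) * (∏ k : Fin K, (conjQuadratic (unityRoot M k) : PowerSeries ℝ)) * hw
  · simpa using hpos j hj

end RootsOfUnity

section Sharpness

open Polynomial Filter
open scoped PowerSeries.WithPiTopology

variable {m n : ℕ}

lemma exists_expnt_ge_of_odd (hn : 3 ≤ n) (hnm : n ≤ m) (hodd : Odd n) :
    ∃ (K : Set (Fin n → ℝ)) (A : Matrix (Fin n) (Fin n) ℝ), MemP m K ∧ KPrimitive K A ∧
      (n - 2) * (m - 1) + m ≤ expnt K A := by
  obtain ⟨K, hK⟩ := hodd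
  obtain ⟨T, rfl⟩ := Nat.exists_eq_add_of_le' hnm
  rw [← add_assoc]
  refine exists_expnt_ge_of_cofactor (l := 𝓝[>] (0 : ℝ)) (M := T + n) (K := K) (c := id) (c₀ := 0)
    (g := 1) (G := 1) hn le_rfl (by lia) (by lia) (Ioo_mem_nhdsGT one_pos)
    (tendsto_id.mono_left nhdsWithin_le_nhds) (fun z hz ↦ ?_) (fun _ ↦ monic_one)
    (fun _ ↦ by simp [hK]) (by simp) (.of_forall fun c ↦ ?_) (by simp) (mul_one _)
    (fun j hj ↦ sinBinom_pos (by lia))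
  · simp [wielandtPoly, hz]
  · rw [Pi.one_apply, mul_one, dvd_iff_isRoot]
    simp [wielandtPoly]

lemma aeval_wielandtPoly_eq_zero_of_pow_eq_one (m : ℕ) {z : ℂ} (hz : z ^ (2 * (m / 2)) = 1) :
    aeval z (wielandtPoly m ((1 - (-1) ^ m) / 2)) = 0 := by
  rcases Nat.even_or_odd m with hm | hm
  · rw [Nat.two_mul_div_two_of_even hm] at hz
    simp [wielandtPoly, hm.neg_one_pow, hz]
  · rw [← Nat.two_mul_div_two_add_one_of_odd hm, pow_succ, pow_mul, neg_one_sq, one_pow]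
    simp [wielandtPoly, pow_succ, hz]

lemma isRoot_neg_wielandtPoly {s : ℝ} (hs : 1 + s ≠ 0) (m : ℕ) :
    (wielandtPoly m ((1 - (-s) ^ m) / (1 + s))).IsRoot (-s) := by
  simp only [wielandtPoly, IsRoot, eval_sub, eval_mul, eval_pow, eval_X, eval_C]
  field_simp
  ring

lemma one_sub_neg_pow_div_mem_Ioo {s : ℝ} (hs : s ∈ Ioo 0 1) (hm : 2 ≤ m) :
    (1 - (-s) ^ m) / (1 + s) ∈ Ioo 0 1 := by
  have hpow : |(-s) ^ m| < s := by
    rw [abs_pow, abs_neg, abs_of_pos hs.1]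
    exact pow_lt_self_of_lt_one₀ hs.1 hs.2 hm
  have hs0 : 0 < 1 + s := by linarith [hs.1]
  rw [abs_lt] at hpow
  refine ⟨div_pos ?_ hs0, (div_lt_one hs0).2 ?_⟩ <;> linarith [hs.2]

lemma mul_X_add_C_dvd_wielandtPoly {s : ℝ} (hs : 1 + s ≠ 0) (m : ℕ) :
    (X - C 1) * (X + C s) ∣ wielandtPoly m ((1 - (-s) ^ m) / (1 + s)) := by
  rw [← sub_neg_eq_add X, ← C_neg]
  refine (isCoprime_X_sub_C_of_isUnit_sub ?_).mul_dvd (dvd_iff_isRoot.2 ?_)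
    (dvd_iff_isRoot.2 (isRoot_neg_wielandtPoly hs m))
  · rwa [sub_neg_eq_add, isUnit_iff_ne_zero]
  · simp [wielandtPoly]

lemma continuous_coe_X_add_C : Continuous fun s : ℝ ↦ ((X + C s : ℝ[X]) : PowerSeries ℝ) := by
  refine continuous_iff_continuousAt.2 fun s ↦
    (PowerSeries.WithPiTopology.tendsto_iff_coeff_tendsto ..).2 fun d ↦ Continuous.tendsto ?_ s
  simp only [Polynomial.coeff_coe, coeff_add, coeff_C]
  split_ifs <;> fun_prop

lemma exists_expnt_ge_of_even (hn : 3 ≤ n) (hnm : n ≤ m) (heven : Even n) :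
    ∃ (K : Set (Fin n → ℝ)) (A : Matrix (Fin n) (Fin n) ℝ), MemP m K ∧ KPrimitive K A ∧
      (n - 2) * (m - 1) + 2 * (m / 2) ≤ expnt K A := by
  obtain ⟨K, hK⟩ : ∃ K, n = 2 * (K + 1) := ⟨n / 2 - 1, by grind⟩
  obtain ⟨d, hd⟩ : ∃ d, m / 2 = d + (K + 1) := Nat.exists_eq_add_of_le' (by lia)
  have hlim : Tendsto (fun s : ℝ ↦ (1 - (-s) ^ m) / (1 + s)) (𝓝[<] 1)
      (𝓝 ((1 - (-1) ^ m) / 2)) := by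
    have hcont : ContinuousAt (fun s : ℝ ↦ (1 - (-s) ^ m) / (1 + s)) 1 := by
      fun_prop (disch := norm_num)
    simpa [one_add_one_eq_two] using hcont.tendsto.mono_left nhdsWithin_le_nhds
  have hIoo : ∀ᶠ s in 𝓝[<] (1 : ℝ), s ∈ Ioo 0 1 := Ioo_mem_nhdsLT one_pos
  rw [show 2 * (m / 2) = 2 * d + n by lia, ← add_assoc]
  refine exists_expnt_ge_of_cofactor (M := 2 * (m / 2)) (K := K) (g := fun s : ℝ ↦ X + C s)
    (G := 1 + PowerSeries.X) hn (by lia) (by lia) (by lia) ?_ hlim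
    (fun z ↦ aeval_wielandtPoly_eq_zero_of_pow_eq_one m) monic_X_add_C (fun s ↦ ?_)
    (fun s z hz ↦ ?_) ?_ ?_ (mk_altSum_mul_one_add_X _)
    (fun j hj ↦ altSum_sinBinom_pos (by lia) (by lia) hj)
  · filter_upwards [hIoo] with s hs using one_sub_neg_pow_div_mem_Ioo hs (by lia)
  · rw [natDegree_X_add_C]
    lia
  · rw [map_add, aeval_X, aeval_C] at hz
    simp [eq_neg_of_add_eq_zero_left hz]
  · filter_upwards [hIoo] with s hs
    exact mul_X_add_C_dvd_wielandtPoly (by linarith [hs.1]) m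
  · exact (continuous_coe_X_add_C.tendsto' 1 _ (by simp [add_comm])).mono_left nhdsWithin_le_nhds

end Sharpness

/-- For `3 ≤ n ≤ m`: (a) `γ(A) ≤ (n-1)(m-1)+1` for every `K ∈ P(m,n)` and `K`-primitive `A`;
(b) if `m` is even, or `m` and `n` are both odd, the bound `(n-1)(m-1)+1` is attained;
(c) if `m` is odd and `n` is even, the value `(n-1)(m-1)` is attained (so the maximum of
`γ(K)` over `P(m,n)` is at least `(n-1)(m-1)` and at most `(n-1)(m-1)+1`). -/
theorem stmt_17 (m n : ℕ) (hn : 3 ≤ n) (hnm : n ≤ m) :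
    (∀ (K : Set (Fin n → ℝ)) (A : Matrix (Fin n) (Fin n) ℝ),
      MemP m K → KPrimitive K A → expnt K A ≤ (n - 1) * (m - 1) + 1) ∧
    ((Even m ∨ (Odd m ∧ Odd n)) →
      ∃ (K : Set (Fin n → ℝ)) (A : Matrix (Fin n) (Fin n) ℝ),
        MemP m K ∧ KPrimitive K A ∧ expnt K A = (n - 1) * (m - 1) + 1) ∧
    ((Odd m ∧ Even n) →
      ∃ (K : Set (Fin n → ℝ)) (A : Matrix (Fin n) (Fin n) ℝ),
        MemP m K ∧ KPrimitive K A ∧ (n - 1) * (m - 1) ≤ expnt K A) := by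
  have hupper (K : Set (Fin n → ℝ)) (A : Matrix (Fin n) (Fin n) ℝ) (hK : MemP m K)
      (hA : KPrimitive K A) : expnt K A ≤ (n - 1) * (m - 1) + 1 := by
    obtain ⟨C, rfl⟩ := hK.1.1.exists_pointedCone_coe_eq
    rw [← hK.2, ncard_extremeRays (fun _ ↦ hK.1.1.eq_zero_of_neg_mem) hK.1.fg]
    exact hA.expnt_le (by lia) hK.1.1 hK.1.fg
  have hmul : (n - 2) * (m - 1) + (m - 1) = (n - 1) * (m - 1) := by
    rw [← Nat.succ_mul, show (n - 2).succ = n - 1 by lia]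
  refine ⟨hupper, fun hparity ↦ ?_, fun ⟨hm, hne⟩ ↦ ?_⟩
  · obtain ⟨K, A, hK, hA, hge⟩ : ∃ (K : Set (Fin n → ℝ)) (A : Matrix (Fin n) (Fin n) ℝ),
        MemP m K ∧ KPrimitive K A ∧ (n - 2) * (m - 1) + m ≤ expnt K A := by
      rcases n.even_or_odd with hne | hno
      · have hm : Even m := hparity.resolve_right fun h ↦ Nat.not_even_iff_odd.2 h.2 hne
        simpa only [Nat.two_mul_div_two_of_even hm] using exists_expnt_ge_of_even hn hnm hne
      · exact exists_expnt_ge_of_odd hn hnm hno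
    exact ⟨K, A, hK, hA, (hupper K A hK hA).antisymm (by lia)⟩
  · obtain ⟨K, A, hK, hA, hge⟩ := exists_expnt_ge_of_even hn hnm hne
    have hhalf := Nat.two_mul_div_two_add_one_of_odd hm
    exact ⟨K, A, hK, hA, by lia⟩
end
end
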